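/- Let Ω be a bounded Lipschitz domain in ℝ^N (N ≥ 2), x₀ ∈ Ω, a > 0, V ∈ 𝒱(Ω,a), let y ∈ ∂Ω and let ν_y be a pseudo-normal at y for Ω. Then there is a constant C' > 0 such that for all sufficiently small t > 0: K_y(y + tν_y) ≤ C' · K_y^V(y + tν_y). -/

import Mathlib

open MeasureTheory Metric Set Filter Topology
open scoped ENNReal NNReal

noncomputable section

namespace Anc

abbrev ES (N : ℕ) := EuclideanSpace ℝ (Fin N)

/-- `δ_Ω(x)`: the distance from `x` to the complement of `Ω`. -/
def dista {N : ℕ} (Ω : Set (ES N)) (x : ES N) : ℝ := infDist x Ωᶜ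

/-- Pointwise Laplacian (junk values where the derivatives do not exist). -/
def lap {N : ℕ} (u : ES N → ℝ) (x : ES N) : ℝ :=
  ∑ i : Fin N,
    fderiv ℝ (fun y => fderiv ℝ u y (EuclideanSpace.single i 1)) x (EuclideanSpace.single i 1)

/-- Smooth compactly supported test functions in `Ω`. -/
def IsTestFun {N : ℕ} (Ω : Set (ES N)) (φ : ES N → ℝ) : Prop :=
  ContDiff ℝ (⊤ : ℕ∞) φ ∧ IsCompact (tsupport φ) ∧ tsupport φ ⊆ Ω

/-- `u` is a continuous weak solution of `Δu - V·u = 0` in `Ω` (i.e. `L_V`-harmonic). -/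
def LVHarmonic {N : ℕ} (Ω : Set (ES N)) (V u : ES N → ℝ) : Prop :=
  ContinuousOn u Ω ∧ LocallyIntegrableOn u Ω ∧
    LocallyIntegrableOn (fun x => V x * u x) Ω ∧
    ∀ φ, IsTestFun Ω φ → ∫ x in Ω, u x * lap φ x = ∫ x in Ω, V x * u x * φ x

/-- `s` is `L_V`-superharmonic in `Ω` (weakly, `Δs - V·s ≤ 0`, `s` l.s.c.). -/
def LVSuperharmonic {N : ℕ} (Ω : Set (ES N)) (V s : ES N → ℝ) : Prop :=
  LowerSemicontinuousOn s Ω ∧ LocallyIntegrableOn s Ω ∧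
    LocallyIntegrableOn (fun x => V x * s x) Ω ∧
    ∀ φ, IsTestFun Ω φ → (∀ x, 0 ≤ φ x) →
      ∫ x in Ω, s x * lap φ x ≤ ∫ x in Ω, V x * s x * φ x

/-- The class `𝒱(Ω,a)` of nonnegative Borel potentials with `V(x) ≤ a/δ_Ω(x)²`. -/
def VClass {N : ℕ} (Ω : Set (ES N)) (a : ℝ) (V : ES N → ℝ) : Prop :=
  Measurable V ∧ ∀ x ∈ Ω, 0 ≤ V x ∧ V x * dista Ω x ^ 2 ≤ a

/-- Lipschitz domain: open, connected, and near every boundary point, after an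
orthogonal change of coordinates, the domain is the region above the graph of a
Lipschitz function. -/
def IsLipschitzDomain {N : ℕ} (Ω : Set (ES N)) : Prop :=
  IsOpen Ω ∧ IsConnected Ω ∧
    ∀ z ∈ frontier Ω, ∃ (g : ES N ≃ₗᵢ[ℝ] ES N) (i : Fin N) (f : ES N → ℝ)
      (L : ℝ≥0) (ε : ℝ), 0 < ε ∧ LipschitzWith L f ∧
      (∀ x w : ES N, (∀ j, j ≠ i → x j = w j) → f x = f w) ∧
      ∀ x ∈ ball z ε, (x ∈ Ω ↔ f (g x) < g x i)

/-- `Ω` has a `C^{1,α}` boundary near `y`. -/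
def IsC1AlphaNear {N : ℕ} (Ω : Set (ES N)) (α : ℝ) (y : ES N) : Prop :=
  ∃ (g : ES N ≃ₗᵢ[ℝ] ES N) (i : Fin N) (f : ES N → ℝ) (C : ℝ≥0) (ε : ℝ),
    0 < ε ∧ ContDiff ℝ 1 f ∧ HolderWith C α.toNNReal (fderiv ℝ f) ∧
    (∀ x w : ES N, (∀ j, j ≠ i → x j = w j) → f x = f w) ∧
    ∀ x ∈ ball y ε, (x ∈ Ω ↔ f (g x) < g x i)

/-- `K` is the `L_V`-Martin kernel of `Ω` with pole `y ∈ ∂Ω`, normalized at `x₀`: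
the unique positive `L_V`-harmonic function vanishing on `∂Ω ∖ {y}` with `K x₀ = 1`. -/
def IsMartinKernel {N : ℕ} (Ω : Set (ES N)) (V : ES N → ℝ) (x₀ y : ES N)
    (K : ES N → ℝ) : Prop :=
  LVHarmonic Ω V K ∧ (∀ x ∈ Ω, 0 < K x) ∧ K x₀ = 1 ∧
    ∀ z ∈ frontier Ω, z ≠ y → Tendsto K (𝓝[Ω] z) (𝓝 0)

/-- `G` is the `L_V`-Green function of `Ω` with pole `y ∈ Ω`:
positive, vanishing at the boundary, and `L_V G = -δ_y` weakly. -/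
def IsGreenFunction {N : ℕ} (Ω : Set (ES N)) (V : ES N → ℝ) (y : ES N)
    (G : ES N → ℝ) : Prop :=
  ContinuousOn G (Ω \ {y}) ∧ (∀ x ∈ Ω \ {y}, 0 < G x) ∧ LocallyIntegrableOn G Ω ∧
    (∀ z ∈ frontier Ω, Tendsto G (𝓝[Ω \ {y}] z) (𝓝 0)) ∧
    ∀ φ, IsTestFun Ω φ → ∫ x in Ω, G x * (lap φ x - V x * φ x) = -φ y

/-- `y ∈ ∂Ω` is finely regular w.r.t. `V`, `Ky` being the classical Martin kernel at
`y`: the greatest `L_V`-harmonic minorant of `Ky` is positive, equivalently `Ky`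
admits a positive `L_V`-harmonic minorant. -/
def FinelyRegular {N : ℕ} (Ω : Set (ES N)) (V Ky : ES N → ℝ) : Prop :=
  ∃ h, LVHarmonic Ω V h ∧ (∀ x ∈ Ω, 0 < h x) ∧ ∀ x ∈ Ω, h x ≤ Ky x

/-- `h` is the greatest nonnegative `L_V`-harmonic minorant of `w` in `Ω`. -/
def IsGreatestLVHarmMinorant {N : ℕ} (Ω : Set (ES N)) (V w h : ES N → ℝ) : Prop :=
  LVHarmonic Ω V h ∧ (∀ x ∈ Ω, 0 ≤ h x ∧ h x ≤ w x) ∧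
    ∀ g, LVHarmonic Ω V g → (∀ x ∈ Ω, 0 ≤ g x ∧ g x ≤ w x) → ∀ x ∈ Ω, g x ≤ h x

/-- Classical superharmonicity via the sub-mean value property. -/
def IsSuperharmonicOn {N : ℕ} (W : Set (ES N)) (s : ES N → ℝ) : Prop :=
  LowerSemicontinuousOn s W ∧ LocallyIntegrableOn s W ∧
    ∀ x ∈ W, ∀ t > (0:ℝ), closedBall x t ⊆ W → ⨍ z in ball x t, s z ≤ s x

/-- The réduite of `w` over `A` in `W`: infimum of the nonnegative superharmonic
functions in `W` dominating `w` on `A`. -/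
def reduite {N : ℕ} (W : Set (ES N)) (w : ES N → ℝ) (A : Set (ES N)) (x : ES N) : ℝ :=
  sInf {v | ∃ s : ES N → ℝ, IsSuperharmonicOn W s ∧ (∀ z ∈ W, 0 ≤ s z) ∧
    (∀ z ∈ A, w z ≤ s z) ∧ v = s x}

/-- The lower semicontinuous regularization `R̂` of the réduite. -/
def reduiteReg {N : ℕ} (W : Set (ES N)) (w : ES N → ℝ) (A : Set (ES N)) (x : ES N) : ℝ :=
  liminf (reduite W w A) (𝓝[W] x)

/-- Nontangential approach region at `y` with aperture `κ`. -/
def ntRegion {N : ℕ} (Ω : Set (ES N)) (y : ES N) (κ : ℝ) : Set (ES N) :=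
  {x | x ∈ Ω ∧ dist x y ≤ κ * dista Ω x}

/-- `g` tends to `l` nontangentially at `y`. -/
def TendstoNT {N : ℕ} (Ω : Set (ES N)) (g : ES N → ℝ) (y : ES N) (l : Filter ℝ) : Prop :=
  ∀ κ > (0:ℝ), Tendsto g (𝓝[ntRegion Ω y κ] y) l

/-- Truncated cone `{y + t(ν+v) : 0 < t ≤ η, ‖v‖ ≤ η}` with vertex `y`. -/
def truncCone {N : ℕ} (y ν : ES N) (η : ℝ) : Set (ES N) :=
  {x | ∃ (t : ℝ) (v : ES N), 0 < t ∧ t ≤ η ∧ ‖v‖ ≤ η ∧ x = y + t • (ν + v)}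

/-- Last coordinate of a point of `ℝ^{n+1}`. -/
def lastC {n : ℕ} (x : ES (n + 1)) : ℝ := x (Fin.last n)

/-- First `n` coordinates of a point of `ℝ^{n+1}`. -/
def firstC {n : ℕ} (x : ES (n + 1)) : ES n :=
  (EuclideanSpace.equiv (Fin n) ℝ).symm fun i => x i.castSucc

/-- The region `U_f(r,ρ) = {(x',x_N) : |x'| < r, f(x') < x_N < ρ}`. -/
def Ucyl {n : ℕ} (f : ES n → ℝ) (r ρ : ℝ) : Set (ES (n + 1)) :=
  {x | ‖firstC x‖ < r ∧ f (firstC x) < lastC x ∧ lastC x < ρ}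

/-- The cylinder `T(t) = B_{N-1}(0,tr) × (-tρ, tρ)`. -/
def Tcyl (n : ℕ) (r ρ t : ℝ) : Set (ES (n + 1)) :=
  {x | ‖firstC x‖ < t * r ∧ |lastC x| < t * ρ}

/-- The graph part `∂_#U` of the boundary of `U_f(r,ρ)`. -/
def graphBdry {n : ℕ} (f : ES n → ℝ) (r ρ : ℝ) : Set (ES (n + 1)) :=
  frontier (Ucyl f r ρ) ∩ {x | ‖firstC x‖ < r ∧ lastC x = f (firstC x)}

/-! The kernel `K^V` is subharmonic because `V ≥ 0`, so apart from the boundary values only three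
properties of the two kernels matter: Harnack's inequality for both, the super-mean-value
inequality for `K` and the sub-mean-value inequality for `K^V`. Let `q = y + tν` and `r = t‖ν‖`. A
barrier makes `K^V` decay by a fixed factor near the graph of `∂Ω`. Together with Harnack chains
this gives the Carleson estimate `K^V ≤ C K^V(q)` on the part of `Ω` at distance comparable to `r`
from `y`. Hence, for suitable constants, `w = α K / K(q) - β K^V / K^V(q)` is large away from the
graph and only slightly negative near it. Iterating the decay on shrinking balls centred at
boundary points shows that such a function is nonnegative, so `w ≥ 0` on `Ω ∩ ∂B(y, 4r)`. Both
kernels vanish on the rest of the boundary, and the maximum principle extends `w ≥ 0` to `Ω ∖ B(y,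
4r)`. At `x₀`, where both kernels equal `1`, this is the comparison of `K(q)` with `K^V(q)`. -/

section BumpKernel

/-- The smooth profile `s ↦ exp (-1 / (1 - s))` of the averaging kernel, extended by `0` to
`s ≥ 1`. -/
def bumpProfile (s : ℝ) : ℝ := expNegInvGlue (1 - s)

/-- Half the primitive of `bumpProfile` that vanishes on `[1, ∞)`, with the sign reversed. -/
def bumpPrimitive (s : ℝ) : ℝ := (1 / 2) * ∫ t in s..1, bumpProfile t

lemma contDiff_bumpProfile : ContDiff ℝ (⊤ : ℕ∞) bumpProfile :=
  expNegInvGlue.contDiff.comp (contDiff_const.sub contDiff_id)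

lemma continuous_bumpProfile : Continuous bumpProfile := contDiff_bumpProfile.continuous

lemma continuous_deriv_bumpProfile : Continuous (deriv bumpProfile) :=
  (contDiff_infty_iff_deriv.1 contDiff_bumpProfile).2.continuous

lemma differentiable_bumpProfile : Differentiable ℝ bumpProfile :=
  (contDiff_infty_iff_deriv.1 contDiff_bumpProfile).1

lemma bumpProfile_nonneg (s : ℝ) : 0 ≤ bumpProfile s := expNegInvGlue.nonneg _

lemma bumpProfile_eq_zero {s : ℝ} (hs : 1 ≤ s) : bumpProfile s = 0 :=
  expNegInvGlue.zero_of_nonpos (by linarith)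

lemma bumpProfile_pos {s : ℝ} (hs : s < 1) : 0 < bumpProfile s :=
  expNegInvGlue.pos_of_pos (by linarith)

lemma antitone_bumpProfile : Antitone bumpProfile :=
  fun _ _ h => expNegInvGlue.monotone (by linarith)

lemma deriv_bumpProfile_eq_zero {s : ℝ} (hs : 1 < s) : deriv bumpProfile s = 0 := by
  have hzero : bumpProfile =ᶠ[𝓝 s] fun _ => 0 := by
    filter_upwards [Ioi_mem_nhds hs] with t ht using bumpProfile_eq_zero (le_of_lt ht)
  rw [hzero.deriv_eq, deriv_const]

lemma hasDerivAt_bumpPrimitive (s : ℝ) :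
    HasDerivAt bumpPrimitive (-(1 / 2) * bumpProfile s) s := by
  have h := intervalIntegral.integral_hasDerivAt_left
    (continuous_bumpProfile.intervalIntegrable s 1)
    (continuous_bumpProfile.stronglyMeasurableAtFilter _ _) continuous_bumpProfile.continuousAt
  exact (h.const_mul (1 / 2 : ℝ)).congr_deriv (by ring)

lemma contDiff_bumpPrimitive : ContDiff ℝ (⊤ : ℕ∞) bumpPrimitive := by
  refine contDiff_infty_iff_deriv.2 ⟨fun s => (hasDerivAt_bumpPrimitive s).differentiableAt, ?_⟩
  rw [funext fun s => (hasDerivAt_bumpPrimitive s).deriv]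
  exact contDiff_const.mul contDiff_bumpProfile

lemma bumpPrimitive_eq_zero {s : ℝ} (hs : 1 ≤ s) : bumpPrimitive s = 0 := by
  have h : ∫ t in s..1, bumpProfile t = ∫ _ in s..1, (0 : ℝ) :=
    intervalIntegral.integral_congr fun t ht => bumpProfile_eq_zero (uIcc_of_ge hs ▸ ht).1
  rw [bumpPrimitive, h, intervalIntegral.integral_zero, mul_zero]

lemma bumpPrimitive_nonneg (s : ℝ) : 0 ≤ bumpPrimitive s := by
  rcases le_total 1 s with h | h
  · rw [bumpPrimitive_eq_zero h]
  · exact mul_nonneg (by norm_num)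
      (intervalIntegral.integral_nonneg h fun t _ => bumpProfile_nonneg t)

lemma bumpPrimitive_le {s : ℝ} (hs : 0 ≤ s) : bumpPrimitive s ≤ (1 / 2) * bumpProfile s := by
  rcases le_total 1 s with h | h
  · rw [bumpPrimitive_eq_zero h, bumpProfile_eq_zero h, mul_zero]
  · have hle : ∫ t in s..1, bumpProfile t ≤ ∫ _ in s..1, bumpProfile s :=
      intervalIntegral.integral_mono_on h (continuous_bumpProfile.intervalIntegrable _ _)
        intervalIntegrable_const fun t ht => antitone_bumpProfile ht.1
    rw [intervalIntegral.integral_const, smul_eq_mul] at hle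
    have := bumpProfile_nonneg s
    unfold bumpPrimitive
    nlinarith

variable {N : ℕ}

/-- The integral of `w ↦ bumpProfile (‖w‖ ^ 2)`, which normalizes `bumpKernel`. -/
def bumpMass (N : ℕ) : ℝ := ∫ w : ES N, bumpProfile (‖w‖ ^ 2)

/-- The smooth radial probability density with support the closed ball `closedBall x r`, used in
place of the uniform density in mean value properties. -/
def bumpKernel (r : ℝ) (x w : ES N) : ℝ :=
  (bumpMass N * r ^ N)⁻¹ * bumpProfile (‖w - x‖ ^ 2 / r ^ 2)

lemma bumpMass_pos : 0 < bumpMass N := by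
  refine Continuous.integral_pos_of_hasCompactSupport_nonneg_nonzero (x := 0)
    (continuous_bumpProfile.comp (by fun_prop)) ?_ (fun w => bumpProfile_nonneg _)
    (bumpProfile_pos (by simp)).ne'
  refine HasCompactSupport.intro (isCompact_closedBall 0 1) fun w hw => bumpProfile_eq_zero ?_
  rw [mem_closedBall_zero_iff, not_le] at hw
  exact one_le_pow₀ hw.le

lemma integral_bumpProfile_normSq_div {r : ℝ} (hr : 0 < r) (x : ES N) :
    ∫ w, bumpProfile (‖w - x‖ ^ 2 / r ^ 2) = r ^ N * bumpMass N := by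
  rw [integral_sub_right_eq_self (fun w : ES N => bumpProfile (‖w‖ ^ 2 / r ^ 2)) x]
  have hscale := Measure.integral_comp_inv_smul_of_nonneg (volume : Measure (ES N))
    (fun w : ES N => bumpProfile (‖w‖ ^ 2)) hr.le
  simp only [finrank_euclideanSpace, Fintype.card_fin, smul_eq_mul] at hscale
  rw [bumpMass, ← hscale]
  congr 1 with w
  rw [norm_smul, norm_inv, Real.norm_of_nonneg hr.le, mul_pow, inv_pow, div_eq_inv_mul]

lemma one_le_normSq_div_sq {r : ℝ} (hr : 0 < r) {x w : ES N} (hw : w ∉ ball x r) :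
    1 ≤ ‖w - x‖ ^ 2 / r ^ 2 := by
  rw [mem_ball, not_lt, dist_eq_norm] at hw
  rw [one_le_div (by positivity)]
  gcongr

lemma bumpKernel_nonneg {r : ℝ} (hr : 0 < r) (x w : ES N) : 0 ≤ bumpKernel r x w := by
  have := bumpProfile_nonneg (‖w - x‖ ^ 2 / r ^ 2)
  have := bumpMass_pos (N := N)
  unfold bumpKernel
  positivity

lemma bumpKernel_eq_zero {r : ℝ} (hr : 0 < r) {x w : ES N} (hw : w ∉ ball x r) :
    bumpKernel r x w = 0 := by
  rw [bumpKernel, bumpProfile_eq_zero (one_le_normSq_div_sq hr hw), mul_zero]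

lemma bumpKernel_pos {r : ℝ} {x w : ES N} (hw : w ∈ ball x r) : 0 < bumpKernel r x w := by
  have hr : 0 < r := pos_of_mem_ball hw
  rw [mem_ball, dist_eq_norm] at hw
  have hprofile : 0 < bumpProfile (‖w - x‖ ^ 2 / r ^ 2) := by
    apply bumpProfile_pos
    rw [div_lt_one (by positivity)]
    gcongr
  have := bumpMass_pos (N := N)
  unfold bumpKernel
  positivity

lemma continuous_bumpKernel (r : ℝ) (x : ES N) : Continuous (bumpKernel r x) :=
  continuous_const.mul (continuous_bumpProfile.comp (by fun_prop))

lemma integral_bumpKernel {r : ℝ} (hr : 0 < r) (x : ES N) : ∫ w, bumpKernel r x w = 1 := by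
  have := bumpMass_pos (N := N)
  simp only [bumpKernel]
  rw [integral_const_mul, integral_bumpProfile_normSq_div hr]
  field_simp

lemma integrable_bumpKernel {r : ℝ} (hr : 0 < r) (x : ES N) : Integrable (bumpKernel r x) :=
  (continuous_bumpKernel r x).integrable_of_hasCompactSupport <|
    HasCompactSupport.intro (isCompact_closedBall x r) fun _ hw =>
      bumpKernel_eq_zero hr fun h => hw (ball_subset_closedBall h)

lemma integrable_mul_of_continuousOn_closedBall {x : ES N} {r : ℝ} {φ u : ES N → ℝ}
    (hφ : Continuous φ) (hφ0 : ∀ w, w ∉ closedBall x r → φ w = 0)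
    (hu : ContinuousOn u (closedBall x r)) : Integrable (fun w => φ w * u w) := by
  have hintegr : IntegrableOn (fun w => φ w * u w) (closedBall x r) :=
    (hφ.continuousOn.mul hu).integrableOn_compact (isCompact_closedBall x r)
  rwa [integrableOn_iff_integrable_of_support_subset] at hintegr
  exact fun w hw => by_contra fun h => hw (by simp only [hφ0 w h, zero_mul])

lemma integrable_bumpKernel_mul {x : ES N} {r : ℝ} (hr : 0 < r) {u : ES N → ℝ}
    (hu : ContinuousOn u (closedBall x r)) : Integrable (fun w => bumpKernel r x w * u w) :=
  integrable_mul_of_continuousOn_closedBall (continuous_bumpKernel r x)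
    (fun _ hw => bumpKernel_eq_zero hr fun h => hw (ball_subset_closedBall h)) hu

end BumpKernel

section Laplacian

variable {N : ℕ}

lemma hasFDerivAt_normSq_sub (x w : ES N) :
    HasFDerivAt (fun w : ES N => ‖w - x‖ ^ 2) (2 • innerSL ℝ (w - x)) w := by
  simpa using ((hasFDerivAt_id w).sub_const x).norm_sq

lemma fderiv_comp_normSq_sub {Θ : ℝ → ℝ} (hΘ : Differentiable ℝ Θ) (x w : ES N) (i : Fin N) :
    fderiv ℝ (fun w : ES N => Θ (‖w - x‖ ^ 2)) w (EuclideanSpace.single i 1)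
      = 2 * deriv Θ (‖w - x‖ ^ 2) * (w - x) i := by
  have h : HasFDerivAt (fun w : ES N => Θ (‖w - x‖ ^ 2)) _ w :=
    (hΘ (‖w - x‖ ^ 2)).hasDerivAt.comp_hasFDerivAt w (hasFDerivAt_normSq_sub x w)
  rw [h.fderiv]
  simp [EuclideanSpace.inner_single_right]
  ring

lemma fderiv_fderiv_comp_normSq_sub {Θ : ℝ → ℝ} (hΘ : ContDiff ℝ 2 Θ) (x w : ES N) (i : Fin N) :
    fderiv ℝ (fun y => fderiv ℝ (fun w : ES N => Θ (‖w - x‖ ^ 2)) y (EuclideanSpace.single i 1)) w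
        (EuclideanSpace.single i 1)
      = 4 * deriv (deriv Θ) (‖w - x‖ ^ 2) * (w - x) i ^ 2 + 2 * deriv Θ (‖w - x‖ ^ 2) := by
  rw [funext fun y => fderiv_comp_normSq_sub (hΘ.differentiable two_ne_zero) x y i]
  have hderiv := (hΘ.differentiable_deriv_two (‖w - x‖ ^ 2)).hasDerivAt.comp_hasFDerivAt w
    (hasFDerivAt_normSq_sub x w)
  have hcoord : HasFDerivAt (fun w : ES N => (w - x) i) (EuclideanSpace.proj i : ES N →L[ℝ] ℝ) w :=
    (EuclideanSpace.proj i : ES N →L[ℝ] ℝ).hasFDerivAt.comp w ((hasFDerivAt_id w).sub_const x)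
  refine (congrArg (· (EuclideanSpace.single i 1))
    ((hderiv.const_mul 2).mul hcoord).fderiv).trans ?_
  simp [EuclideanSpace.inner_single_right]
  ring

lemma lap_comp_normSq_sub {Θ : ℝ → ℝ} (hΘ : ContDiff ℝ 2 Θ) (x w : ES N) :
    lap (fun w : ES N => Θ (‖w - x‖ ^ 2)) w
      = 4 * ‖w - x‖ ^ 2 * deriv (deriv Θ) (‖w - x‖ ^ 2) + 2 * N * deriv Θ (‖w - x‖ ^ 2) := by
  have hnorm : ‖w - x‖ ^ 2 = ∑ i, (w - x) i ^ 2 := EuclideanSpace.real_norm_sq_eq _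
  simp only [lap, fderiv_fderiv_comp_normSq_sub hΘ]
  rw [Finset.sum_add_distrib, ← Finset.mul_sum, ← hnorm, Finset.sum_const, Finset.card_univ,
    Fintype.card_fin, nsmul_eq_mul]
  ring

lemma contDiff_fderiv_apply {m : WithTop ℕ∞} {b : ES N → ℝ} (hb : ContDiff ℝ (m + 1) b) (v : ES N) :
    ContDiff ℝ m (fun y => fderiv ℝ b y v) :=
  (hb.fderiv_right le_rfl).clm_apply contDiff_const

lemma integral_mul_fderiv_apply {b φ : ES N → ℝ} (hb : ContDiff ℝ 1 b) (hφ : ContDiff ℝ 1 φ)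
    (hφc : HasCompactSupport φ) (v : ES N) :
    ∫ x, b x * fderiv ℝ φ x v = -∫ x, fderiv ℝ b x v * φ x := by
  have hb' : Continuous fun x => fderiv ℝ b x v := (contDiff_fderiv_apply (m := 0) hb v).continuous
  have hφ' : Continuous fun x => fderiv ℝ φ x v := (contDiff_fderiv_apply (m := 0) hφ v).continuous
  exact integral_mul_fderiv_eq_neg_fderiv_mul_of_integrable
    ((hb'.mul hφ.continuous).integrable_of_hasCompactSupport hφc.mul_left)
    ((hb.continuous.mul hφ').integrable_of_hasCompactSupport (hφc.fderiv_apply ℝ v).mul_left)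
    ((hb.continuous.mul hφ.continuous).integrable_of_hasCompactSupport hφc.mul_left)
    (fun x _ => hb.differentiable one_ne_zero x) (fun x _ => hφ.differentiable one_ne_zero x)

lemma integral_mul_lap_eq_integral_lap_mul {b φ : ES N → ℝ} (hb : ContDiff ℝ 2 b)
    (hφ : ContDiff ℝ 2 φ) (hφc : HasCompactSupport φ) :
    ∫ x, b x * lap φ x = ∫ x, lap b x * φ x := by
  have hb' := contDiff_fderiv_apply (m := 1) hb
  have hφ' := contDiff_fderiv_apply (m := 1) hφ
  have hb'' := fun v => (contDiff_fderiv_apply (m := 0) (hb' v) v).continuous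
  have hφ'' := fun v => (contDiff_fderiv_apply (m := 0) (hφ' v) v).continuous
  simp only [lap, Finset.mul_sum, Finset.sum_mul]
  rw [integral_finsetSum, integral_finsetSum]
  · refine Finset.sum_congr rfl fun i _ => ?_
    rw [integral_mul_fderiv_apply (hb.of_le one_le_two) (hφ' _) (hφc.fderiv_apply ℝ _),
      integral_mul_fderiv_apply (hb' _) (hφ.of_le one_le_two) hφc, neg_neg]
  · exact fun i _ => ((hb'' _).mul hφ.continuous).integrable_of_hasCompactSupport hφc.mul_left
  · exact fun i _ => (hb.continuous.mul (hφ'' _)).integrable_of_hasCompactSupport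
      ((hφc.fderiv_apply ℝ _).fderiv_apply ℝ _).mul_left

end Laplacian

section MeanValue

variable {N : ℕ}

/-- The compactly supported radial function whose Laplacian is the derivative of `bumpKernel` in
the radius; testing `Δu = f` against it differentiates the averages of `u`. -/
def kernelPotential (r : ℝ) (x w : ES N) : ℝ :=
  r * (bumpMass N * r ^ N)⁻¹ * bumpPrimitive (‖w - x‖ ^ 2 / r ^ 2)

lemma contDiff_kernelPotential (r : ℝ) (x : ES N) : ContDiff ℝ (⊤ : ℕ∞) (kernelPotential r x) :=
  contDiff_const.mul (contDiff_bumpPrimitive.comp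
    (((contDiff_id.sub contDiff_const).norm_sq ℝ).div_const _))

lemma kernelPotential_eq_zero {r : ℝ} (hr : 0 < r) {x w : ES N} (hw : w ∉ ball x r) :
    kernelPotential r x w = 0 := by
  rw [kernelPotential, bumpPrimitive_eq_zero (one_le_normSq_div_sq hr hw), mul_zero]

lemma kernelPotential_nonneg {r : ℝ} (hr : 0 < r) (x w : ES N) : 0 ≤ kernelPotential r x w := by
  have := bumpPrimitive_nonneg (‖w - x‖ ^ 2 / r ^ 2)
  have := bumpMass_pos (N := N)
  unfold kernelPotential
  positivity

lemma kernelPotential_le {r : ℝ} (hr : 0 < r) (x w : ES N) :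
    kernelPotential r x w ≤ r / 2 * bumpKernel r x w := by
  have := bumpMass_pos (N := N)
  calc kernelPotential r x w
      ≤ r * (bumpMass N * r ^ N)⁻¹ * ((1 / 2) * bumpProfile (‖w - x‖ ^ 2 / r ^ 2)) := by
        unfold kernelPotential
        gcongr
        exact bumpPrimitive_le (by positivity)
    _ = r / 2 * bumpKernel r x w := by unfold bumpKernel; ring

lemma tsupport_kernelPotential_subset {r : ℝ} (hr : 0 < r) (x : ES N) :
    tsupport (kernelPotential r x) ⊆ closedBall x r :=
  closure_minimal (fun _ hw => by_contra fun h =>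
    hw (kernelPotential_eq_zero hr fun h' => h (ball_subset_closedBall h'))) isClosed_closedBall

lemma isTestFun_kernelPotential {U : Set (ES N)} {x : ES N} {r : ℝ} (hr : 0 < r)
    (hU : closedBall x r ⊆ U) : IsTestFun U (kernelPotential r x) :=
  ⟨contDiff_kernelPotential r x,
    (isCompact_closedBall x r).of_isClosed_subset (isClosed_tsupport _)
      (tsupport_kernelPotential_subset hr x),
    (tsupport_kernelPotential_subset hr x).trans hU⟩

lemma lap_kernelPotential (r : ℝ) (x w : ES N) :
    lap (kernelPotential r x) w =
      -(r * (bumpMass N * r ^ N)⁻¹ *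
        (2 * ‖w - x‖ ^ 2 * (deriv bumpProfile (‖w - x‖ ^ 2 / r ^ 2) / (r ^ 2 * r ^ 2))
          + N * (bumpProfile (‖w - x‖ ^ 2 / r ^ 2) / r ^ 2))) := by
  set c : ℝ := r * (bumpMass N * r ^ N)⁻¹
  have hsmooth : ContDiff ℝ (⊤ : ℕ∞) (fun s => c * bumpPrimitive (s / r ^ 2)) :=
    contDiff_const.mul (contDiff_bumpPrimitive.comp (contDiff_id.div_const _))
  have hderiv : deriv (fun s => c * bumpPrimitive (s / r ^ 2))
      = fun s => c * (-(1 / 2) * bumpProfile (s / r ^ 2) / r ^ 2) := by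
    funext s
    have h := (hasDerivAt_bumpPrimitive (s / r ^ 2)).comp s
      ((hasDerivAt_id s).div_const (r ^ 2))
    exact (h.const_mul c).deriv.trans (by ring)
  have hderiv2 : deriv (fun s => c * (-(1 / 2) * bumpProfile (s / r ^ 2) / r ^ 2))
      = fun s => c * (-(1 / 2) * deriv bumpProfile (s / r ^ 2) / (r ^ 2 * r ^ 2)) := by
    funext s
    have h := (differentiable_bumpProfile (s / r ^ 2)).hasDerivAt.comp s
      ((hasDerivAt_id s).div_const (r ^ 2))
    exact (((h.const_mul (-(1 / 2))).div_const (r ^ 2)).const_mul c).deriv.trans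
      (by field_simp)
  have hlap := lap_comp_normSq_sub (contDiff_infty.1 hsmooth 2) x w
  rw [hderiv, hderiv2] at hlap
  exact hlap.trans (by ring)

lemma lap_kernelPotential_eq_zero {r : ℝ} (hr : 0 < r) {x w : ES N} (hw : w ∉ closedBall x r) :
    lap (kernelPotential r x) w = 0 := by
  have hs : 1 < ‖w - x‖ ^ 2 / r ^ 2 := by
    rw [mem_closedBall, not_le, dist_eq_norm] at hw
    rw [one_lt_div (by positivity)]
    gcongr
  rw [lap_kernelPotential, deriv_bumpProfile_eq_zero hs, bumpProfile_eq_zero hs.le]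
  ring

lemma continuousOn_lap_kernelPotential (x : ES N) :
    ContinuousOn (fun z : ℝ × ES N => lap (kernelPotential z.1 x) z.2) {z | 0 < z.1} := by
  have hne : ∀ n : ℕ, ∀ z ∈ {z : ℝ × ES N | 0 < z.1}, z.1 ^ n ≠ 0 :=
    fun n z hz => pow_ne_zero n (ne_of_gt hz)
  have hmass := (bumpMass_pos (N := N)).ne'
  have hs : ContinuousOn (fun z : ℝ × ES N => ‖z.2 - x‖ ^ 2 / z.1 ^ 2) {z | 0 < z.1} :=
    ContinuousOn.div (by fun_prop) (by fun_prop) (hne 2)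
  have hprofile := continuous_bumpProfile.comp_continuousOn hs
  have hprofile' := continuous_deriv_bumpProfile.comp_continuousOn hs
  simp only [lap_kernelPotential]
  refine (ContinuousOn.mul (ContinuousOn.mul (by fun_prop) ?_) (ContinuousOn.add ?_ ?_)).neg
  · exact ContinuousOn.inv₀ (by fun_prop) fun z hz => mul_ne_zero hmass (hne N z hz)
  · exact ContinuousOn.mul (by fun_prop)
      (hprofile'.div (by fun_prop) fun z hz => mul_ne_zero (hne 2 z hz) (hne 2 z hz))
  · exact continuousOn_const.mul (hprofile.div (by fun_prop) (hne 2))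

lemma hasDerivAt_bumpKernel {r : ℝ} (hr : 0 < r) (x w : ES N) :
    HasDerivAt (fun r => bumpKernel r x w) (lap (kernelPotential r x) w) r := by
  have hmass := (bumpMass_pos (N := N)).ne'
  have hscale : HasDerivAt (fun r : ℝ => (bumpMass N * r ^ N)⁻¹)
      (-(bumpMass N * (N * r ^ (N - 1))) / (bumpMass N * r ^ N) ^ 2) r :=
    ((hasDerivAt_pow N r).const_mul _).fun_inv (mul_ne_zero hmass (by positivity))
  have harg : HasDerivAt (fun r : ℝ => ‖w - x‖ ^ 2 / r ^ 2)
      (‖w - x‖ ^ 2 * (-(2 * r) / (r ^ 2) ^ 2)) r := by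
    simpa [div_eq_mul_inv] using
      ((hasDerivAt_pow 2 r).fun_inv (by positivity)).const_mul (‖w - x‖ ^ 2)
  have hprofile := (differentiable_bumpProfile (‖w - x‖ ^ 2 / r ^ 2)).hasDerivAt.comp r harg
  refine (hscale.mul hprofile).congr_deriv ?_
  rw [lap_kernelPotential, Function.comp_apply]
  rcases N with - | n
  · simp only [pow_zero, CharP.cast_eq_zero]
    field_simp
    ring
  · rw [Nat.add_sub_cancel]
    field_simp
    ring

/-- The mean of `u` around `x` with respect to the smooth density `bumpKernel r x`. -/
def radialAvg (u : ES N → ℝ) (x : ES N) (r : ℝ) : ℝ := ∫ w, bumpKernel r x w * u w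

lemma radialAvg_add {u v : ES N → ℝ} {x : ES N} {r : ℝ} (hr : 0 < r)
    (hu : ContinuousOn u (closedBall x r)) (hv : ContinuousOn v (closedBall x r)) :
    radialAvg (fun w => u w + v w) x r = radialAvg u x r + radialAvg v x r := by
  simp only [radialAvg, mul_add]
  exact integral_add (integrable_bumpKernel_mul hr hu) (integrable_bumpKernel_mul hr hv)

lemma radialAvg_const_mul (c : ℝ) (u : ES N → ℝ) (x : ES N) (r : ℝ) :
    radialAvg (fun w => c * u w) x r = c * radialAvg u x r := by
  simp only [radialAvg, mul_left_comm _ c]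
  exact integral_const_mul c _

lemma radialAvg_const {r : ℝ} (hr : 0 < r) (c : ℝ) (x : ES N) :
    radialAvg (fun _ => c) x r = c := by
  rw [radialAvg, integral_mul_const, integral_bumpKernel hr, one_mul]

lemma radialAvg_mono {u v : ES N → ℝ} {x : ES N} {r : ℝ} (hr : 0 < r)
    (hu : ContinuousOn u (closedBall x r)) (hv : ContinuousOn v (closedBall x r))
    (huv : ∀ w ∈ ball x r, u w ≤ v w) : radialAvg u x r ≤ radialAvg v x r := by
  refine integral_mono (integrable_bumpKernel_mul hr hu) (integrable_bumpKernel_mul hr hv) ?_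
  intro w
  by_cases hw : w ∈ ball x r
  · exact mul_le_mul_of_nonneg_left (huv w hw) (bumpKernel_nonneg hr x w)
  · simp only [bumpKernel_eq_zero hr hw, zero_mul, le_refl]

lemma tendsto_radialAvg {U : Set (ES N)} (hU : IsOpen U) {u : ES N → ℝ} (hu : ContinuousOn u U)
    {x : ES N} (hx : x ∈ U) : Tendsto (radialAvg u x) (𝓝[>] 0) (𝓝 (u x)) := by
  rw [Metric.tendsto_nhds]
  intro ε hε
  have hclose : ∀ᶠ w in 𝓝 x, w ∈ U ∧ dist (u w) (u x) < ε / 2 :=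
    (hU.eventually_mem hx).and
      (Metric.tendsto_nhds.1 (hu.continuousAt (hU.mem_nhds hx)) _ (half_pos hε))
  obtain ⟨ρ, hρ, hball⟩ := Metric.eventually_nhds_iff_ball.1 hclose
  filter_upwards [Ioo_mem_nhdsGT hρ] with r hr
  have hcont : ContinuousOn u (closedBall x r) :=
    hu.mono fun w hw => (hball w (closedBall_subset_ball hr.2 hw)).1
  have hbound : ∀ w ∈ ball x r, u x - ε / 2 ≤ u w ∧ u w ≤ u x + ε / 2 := fun w hw => by
    have := abs_lt.1 (hball w (ball_subset_ball hr.2.le hw)).2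
    constructor <;> linarith
  have hlower := radialAvg_mono hr.1 continuousOn_const hcont fun w hw => (hbound w hw).1
  have hupper := radialAvg_mono hr.1 hcont continuousOn_const fun w hw => (hbound w hw).2
  rw [radialAvg_const hr.1] at hlower hupper
  rw [Real.dist_eq, abs_lt]
  constructor <;> linarith

lemma exists_closedBall_subset_of_closedBall_subset {U : Set (ES N)} (hU : IsOpen U) {x : ES N}
    {r : ℝ} (hr : 0 ≤ r) (hxr : closedBall x r ⊆ U) : ∃ R > r, closedBall x R ⊆ U := by
  obtain ⟨δ, hδ, hsub⟩ := (isCompact_closedBall x r).exists_cthickening_subset_open hU hxr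
  rw [cthickening_closedBall hδ.le hr] at hsub
  exact ⟨δ + r, by linarith, hsub⟩

lemma hasDerivAt_radialAvg_of_continuousOn {u : ES N → ℝ} {x : ES N} {r R : ℝ} (hr : 0 < r)
    (hrR : r < R) (hu : ContinuousOn u (closedBall x R)) :
    HasDerivAt (radialAvg u x) (∫ w in closedBall x R, lap (kernelPotential r x) w * u w) r := by
  have hball : MeasurableSet (closedBall x R) := measurableSet_closedBall
  have hlocal : radialAvg u x =ᶠ[𝓝 r] fun s => ∫ w in closedBall x R, bumpKernel s x w * u w := by
    filter_upwards [Ioo_mem_nhds hr hrR] with s hs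
    refine (setIntegral_eq_integral_of_forall_compl_eq_zero fun w hw => ?_).symm
    rw [bumpKernel_eq_zero hs.1 fun h => hw (ball_subset_closedBall (ball_subset_ball hs.2.le h)),
      zero_mul]
  obtain ⟨D, hD⟩ := (isCompact_Icc.prod (isCompact_closedBall x R)).exists_bound_of_continuousOn
    ((continuousOn_lap_kernelPotential x).mono
      fun z hz => lt_of_lt_of_le (half_pos hr) (mem_prod.1 hz).1.1)
  have hlap : Continuous (lap (kernelPotential r x)) :=
    (continuousOn_lap_kernelPotential x).comp_continuous
      (f := fun w : ES N => (r, w)) (by fun_prop) fun _ => hr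
  refine HasDerivAt.congr_of_eventuallyEq ?_ hlocal
  refine (hasDerivAt_integral_of_dominated_loc_of_deriv_le (bound := fun w => D * ‖u w‖)
    (F := fun s w => bumpKernel s x w * u w) (F' := fun s w => lap (kernelPotential s x) w * u w)
    (s := Icc (r / 2) (2 * r)) (Icc_mem_nhds (by linarith) (by linarith)) ?_ ?_ ?_ ?_ ?_ ?_).2
  · exact Eventually.of_forall fun s =>
      ((continuous_bumpKernel s x).continuousOn.mul hu).aestronglyMeasurable hball
  · exact ((continuous_bumpKernel r x).continuousOn.mul hu).integrableOn_compact
      (isCompact_closedBall x R)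
  · exact (hlap.continuousOn.mul hu).aestronglyMeasurable hball
  · filter_upwards [ae_restrict_mem hball] with w hw s hs
    rw [norm_mul]
    gcongr
    exact hD (s, w) ⟨hs, hw⟩
  · exact (hu.integrableOn_compact (isCompact_closedBall x R)).norm.const_mul D
  · exact Eventually.of_forall fun w s hs =>
      (hasDerivAt_bumpKernel ((half_pos hr).trans_le hs.1) x w).mul_const _

/-- `u` is a continuous weak solution of `Δu = f` in `U`. -/
def IsWeakPoisson (U : Set (ES N)) (u f : ES N → ℝ) : Prop :=
  ContinuousOn u U ∧ ∀ φ, IsTestFun U φ → ∫ x in U, u x * lap φ x = ∫ x in U, f x * φ x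

namespace IsWeakPoisson

variable {U : Set (ES N)} {u f : ES N → ℝ} {x : ES N} {r : ℝ}

lemma hasDerivAt_radialAvg (h : IsWeakPoisson U u f) (hU : IsOpen U) (hr : 0 < r)
    (hxr : closedBall x r ⊆ U) :
    HasDerivAt (radialAvg u x) (∫ w in U, f w * kernelPotential r x w) r := by
  obtain ⟨R, hrR, hxR⟩ := exists_closedBall_subset_of_closedBall_subset hU hr.le hxr
  have htest : ∫ w in U, f w * kernelPotential r x w
      = ∫ w in closedBall x R, lap (kernelPotential r x) w * u w := by
    rw [← h.2 _ (isTestFun_kernelPotential hr hxr)]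
    simp only [mul_comm (u _)]
    refine setIntegral_eq_of_subset_of_forall_sdiff_eq_zero hU.measurableSet hxR fun w hw => ?_
    rw [lap_kernelPotential_eq_zero hr fun hwr => hw.2 (closedBall_subset_closedBall hrR.le hwr),
      zero_mul]
  rw [htest]
  exact hasDerivAt_radialAvg_of_continuousOn hr hrR (h.1.mono hxR)

lemma le_radialAvg (h : IsWeakPoisson U u f) (hU : IsOpen U) (hr : 0 < r)
    (hxr : closedBall x r ⊆ U) (hf : ∀ w ∈ ball x r, 0 ≤ f w) : u x ≤ radialAvg u x r := by
  have hderiv : ∀ s ∈ Ioc 0 r, HasDerivAt (radialAvg u x) _ s := fun s hs =>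
    h.hasDerivAt_radialAvg hU hs.1 ((closedBall_subset_closedBall hs.2).trans hxr)
  have hmono : MonotoneOn (radialAvg u x) (Ioc 0 r) := by
    refine monotoneOn_of_deriv_nonneg (convex_Ioc 0 r)
      (fun s hs => (hderiv s hs).continuousAt.continuousWithinAt) ?_ ?_ <;> rw [interior_Ioc]
    · exact fun s hs => (hderiv s ⟨hs.1, hs.2.le⟩).differentiableAt.differentiableWithinAt
    · intro s hs
      rw [(hderiv s ⟨hs.1, hs.2.le⟩).deriv]
      refine integral_nonneg fun w => ?_
      by_cases hw : w ∈ ball x s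
      · exact mul_nonneg (hf w (ball_subset_ball hs.2.le hw)) (kernelPotential_nonneg hs.1 x w)
      · simp only [kernelPotential_eq_zero hs.1 hw, mul_zero, Pi.zero_apply, le_refl]
  refine le_of_tendsto (tendsto_radialAvg hU h.1 (hxr (mem_closedBall_self hr.le))) ?_
  filter_upwards [Ioo_mem_nhdsGT hr] with s hs
  exact hmono ⟨hs.1, hs.2.le⟩ ⟨hr, le_rfl⟩ hs.2.le

lemma integral_mul_kernelPotential_le (h : IsWeakPoisson U u f) {A : ℝ} (hr : 0 < r)
    (hxr : closedBall x r ⊆ U) (hf0 : ∀ w ∈ ball x r, 0 ≤ f w)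
    (hf : ∀ w ∈ ball x r, f w ≤ A * u w) :
    ∫ w in U, f w * kernelPotential r x w ≤ A * r / 2 * radialAvg u x r := by
  have hball : ball x r ⊆ U := ball_subset_closedBall.trans hxr
  rw [setIntegral_eq_integral_of_forall_compl_eq_zero fun w hw => by
      rw [kernelPotential_eq_zero hr fun hwr => hw (hball hwr), mul_zero],
    radialAvg, ← integral_const_mul]
  refine integral_mono_of_nonneg (Eventually.of_forall fun w => ?_)
    ((integrable_bumpKernel_mul hr (h.1.mono hxr)).const_mul _) (Eventually.of_forall fun w => ?_)
    <;> by_cases hw : w ∈ ball x r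
  · exact mul_nonneg (hf0 w hw) (kernelPotential_nonneg hr x w)
  · simp only [kernelPotential_eq_zero hr hw, mul_zero, Pi.zero_apply, le_refl]
  · calc f w * kernelPotential r x w ≤ (A * u w) * (r / 2 * bumpKernel r x w) :=
          mul_le_mul (hf w hw) (kernelPotential_le hr x w) (kernelPotential_nonneg hr x w)
            ((hf0 w hw).trans (hf w hw))
      _ = A * r / 2 * (bumpKernel r x w * u w) := by ring
  · simp only [kernelPotential_eq_zero hr hw, bumpKernel_eq_zero hr hw, mul_zero, zero_mul, le_refl]

lemma radialAvg_le (h : IsWeakPoisson U u f) (hU : IsOpen U) {A : ℝ} (hr : 0 < r)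
    (hxr : closedBall x r ⊆ U) (hf0 : ∀ w ∈ ball x r, 0 ≤ f w)
    (hf : ∀ w ∈ ball x r, f w ≤ A * u w) :
    radialAvg u x r ≤ Real.exp (A * r ^ 2 / 4) * u x := by
  let g : ℝ → ℝ := fun s => Real.exp (-(A * s ^ 2 / 4)) * radialAvg u x s
  have hsub : ∀ s ∈ Ioc 0 r, closedBall x s ⊆ U := fun s hs =>
    (closedBall_subset_closedBall hs.2).trans hxr
  have hderiv : ∀ s ∈ Ioc 0 r, HasDerivAt g
      (Real.exp (-(A * s ^ 2 / 4)) * (-(A * s / 2)) * radialAvg u x s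
        + Real.exp (-(A * s ^ 2 / 4)) * ∫ w in U, f w * kernelPotential s x w) s := fun s hs =>
    ((((hasDerivAt_pow 2 s).const_mul A).div_const 4).fun_neg.congr_deriv
      (by push_cast; ring)).exp.mul (h.hasDerivAt_radialAvg hU hs.1 (hsub s hs))
  have hanti : AntitoneOn g (Ioc 0 r) := by
    refine antitoneOn_of_deriv_nonpos (convex_Ioc 0 r)
      (fun s hs => (hderiv s hs).continuousAt.continuousWithinAt) ?_ ?_ <;> rw [interior_Ioc]
    · exact fun s hs => (hderiv s ⟨hs.1, hs.2.le⟩).differentiableAt.differentiableWithinAt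
    · intro s hs
      have hball := ball_subset_ball (x := x) hs.2.le
      have hle := h.integral_mul_kernelPotential_le hs.1 (hsub s ⟨hs.1, hs.2.le⟩)
        (fun w hw => hf0 w (hball hw)) fun w hw => hf w (hball hw)
      rw [(hderiv s ⟨hs.1, hs.2.le⟩).deriv]
      have := mul_le_mul_of_nonneg_left hle (Real.exp_pos (-(A * s ^ 2 / 4))).le
      linarith
  have hlim : Tendsto g (𝓝[>] 0) (𝓝 (1 * u x)) := by
    refine Tendsto.mul ?_ (tendsto_radialAvg hU h.1 (hxr (mem_closedBall_self hr.le)))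
    have hexp : Continuous fun s : ℝ => Real.exp (-(A * s ^ 2 / 4)) := by fun_prop
    simpa using (hexp.tendsto 0).mono_left (nhdsWithin_le_nhds (s := Ioi 0))
  have hle : Real.exp (-(A * r ^ 2 / 4)) * radialAvg u x r ≤ 1 * u x := by
    refine ge_of_tendsto hlim ?_
    filter_upwards [Ioo_mem_nhdsGT hr] with s hs
    exact hanti ⟨hs.1, hs.2.le⟩ ⟨hr, le_rfl⟩ hs.2.le
  rwa [one_mul, Real.exp_neg, inv_mul_le_iff₀ (Real.exp_pos _)] at hle

end IsWeakPoisson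

end MeanValue

section MaximumPrinciple

variable {N : ℕ}

/-- `v` is continuous on `U` and satisfies the sub-mean value inequality for the weighted averages
`radialAvg`; this replaces weak subharmonicity `Δv ≥ 0`. -/
def IsSubmean (U : Set (ES N)) (v : ES N → ℝ) : Prop :=
  ContinuousOn v U ∧ ∀ (x : ES N) (r : ℝ), 0 < r → closedBall x r ⊆ U → v x ≤ radialAvg v x r

namespace IsSubmean

variable {U U' : Set (ES N)} {v w : ES N → ℝ}

lemma mono (hv : IsSubmean U v) (hU : U' ⊆ U) : IsSubmean U' v :=
  ⟨hv.1.mono hU, fun x r hr hxr => hv.2 x r hr (hxr.trans hU)⟩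

lemma add (hv : IsSubmean U v) (hw : IsSubmean U w) : IsSubmean U (fun x => v x + w x) :=
  ⟨hv.1.add hw.1, fun x r hr hxr => by
    rw [radialAvg_add hr (hv.1.mono hxr) (hw.1.mono hxr)]
    exact add_le_add (hv.2 x r hr hxr) (hw.2 x r hr hxr)⟩

lemma const_mul (hv : IsSubmean U v) {c : ℝ} (hc : 0 ≤ c) : IsSubmean U (fun x => c * v x) :=
  ⟨continuousOn_const.mul hv.1, fun x r hr hxr => by
    rw [radialAvg_const_mul]
    exact mul_le_mul_of_nonneg_left (hv.2 x r hr hxr) hc⟩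

lemma const (U : Set (ES N)) (c : ℝ) : IsSubmean U (fun _ => c) :=
  ⟨continuousOn_const, fun x _ hr _ => (radialAvg_const hr c x).ge⟩

lemma eq_of_forall_ball_le (hv : IsSubmean U v) {x : ES N} {r : ℝ} (hr : 0 < r)
    (hxr : closedBall x r ⊆ U) (hmax : ∀ z ∈ ball x r, v z ≤ v x) :
    ∀ z ∈ ball x r, v z = v x := by
  let deficit : ES N → ℝ := fun z => bumpKernel r x z * (v x - v z)
  have hcont : ContinuousOn deficit (ball x r) :=
    (continuous_bumpKernel r x).continuousOn.mul
      (continuousOn_const.sub (hv.1.mono (ball_subset_closedBall.trans hxr)))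
  have hvx : ContinuousOn v (closedBall x r) := hv.1.mono hxr
  have hintegr : Integrable deficit := integrable_bumpKernel_mul hr (continuousOn_const.sub hvx)
  have hnonneg : 0 ≤ deficit := fun z => by
    by_cases hz : z ∈ ball x r
    · exact mul_nonneg (bumpKernel_nonneg hr x z) (sub_nonneg.2 (hmax z hz))
    · simp only [deficit, bumpKernel_eq_zero hr hz, zero_mul, Pi.zero_apply, le_refl]
  have hzero : ∫ z, deficit z = 0 := by
    refine le_antisymm ?_ (integral_nonneg hnonneg)
    simp only [deficit, mul_sub]
    rw [integral_sub ((integrable_bumpKernel hr x).mul_const _) (integrable_bumpKernel_mul hr hvx),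
      integral_mul_const, integral_bumpKernel hr, one_mul]
    exact sub_nonpos.2 (hv.2 x r hr hxr)
  have hae : deficit =ᵐ[volume.restrict (ball x r)] 0 :=
    ae_restrict_of_ae ((integral_eq_zero_iff_of_nonneg hnonneg hintegr).1 hzero)
  intro z hz
  have hdeficit : deficit z = 0 :=
    Measure.eqOn_open_of_ae_eq hae isOpen_ball hcont continuousOn_const hz
  have := (mul_eq_zero.1 hdeficit).resolve_left (bumpKernel_pos hz).ne'
  linarith

end IsSubmean

/-- The upper limit of `v` at `z` along `D` is at most zero: the boundary condition of the maximum
principle, in a form that does not require `v` to have a limit. -/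
def LimsupNonposAt (D : Set (ES N)) (v : ES N → ℝ) (z : ES N) : Prop :=
  ∀ ε > 0, ∀ᶠ w in 𝓝[D] z, v w ≤ ε

namespace LimsupNonposAt

variable {D D' : Set (ES N)} {v : ES N → ℝ} {z : ES N}

lemma mono (h : LimsupNonposAt D v z) (hD : D' ⊆ D) : LimsupNonposAt D' v z := fun ε hε =>
  nhdsWithin_mono z hD (h ε hε)

lemma of_tendsto {l : ℝ} (h : Tendsto v (𝓝[D] z) (𝓝 l)) (hl : l ≤ 0) : LimsupNonposAt D v z :=
  fun _ hε => (h.eventually_lt_const (hl.trans_lt hε)).mono fun _ => le_of_lt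

end LimsupNonposAt

lemma isCompact_superlevelSet {D : Set (ES N)} (hD : IsOpen D) (hDb : Bornology.IsBounded D)
    {v : ES N → ℝ} (hv : ContinuousOn v D)
    (hbdry : ∀ z ∈ frontier D, LimsupNonposAt D v z) {s : ℝ} (hs : 0 < s) :
    IsCompact {z | z ∈ D ∧ s ≤ v z} := by
  refine isCompact_of_isClosed_isBounded (closure_subset_iff_isClosed.1 fun z hz => ?_)
    (hDb.subset fun z hz => hz.1)
  have hfreq := mem_closure_iff_frequently.1 hz
  by_cases hzD : z ∈ D
  · refine ⟨hzD, le_of_not_gt fun hlt => ?_⟩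
    obtain ⟨w, hw, hw'⟩ := (hfreq.and_eventually
      ((hv.continuousAt (hD.mem_nhds hzD)).eventually (gt_mem_nhds hlt))).exists
    exact not_le.2 hw' hw.2
  · have hzf : z ∈ frontier D := hD.frontier_eq ▸ ⟨closure_mono (fun w hw => hw.1) hz, hzD⟩
    obtain ⟨w, hw, hw'⟩ := (hfreq.and_eventually
      (eventually_nhdsWithin_iff.1 (hbdry z hzf (s / 2) (half_pos hs)))).exists
    linarith [hw' hw.1, hw.2]

/-- Among the maximum points of a positive maximum, take one with largest first coordinate: the
maximum is attained on a whole ball around it, which contains points further in that direction. -/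
theorem IsSubmean.nonpos_of_frontier (hN : 0 < N) {D : Set (ES N)} (hD : IsOpen D)
    (hDb : Bornology.IsBounded D) {v : ES N → ℝ} (hv : IsSubmean D v)
    (hbdry : ∀ z ∈ frontier D, LimsupNonposAt D v z) : ∀ x ∈ D, v x ≤ 0 := by
  by_contra! ⟨x, hx, hpos⟩
  let coord : ES N → ℝ := fun z => z ⟨0, hN⟩
  have hcompact := fun {s : ℝ} => isCompact_superlevelSet (s := s) hD hDb hv.1 hbdry
  obtain ⟨x₁, hx₁, hmax₁⟩ :=
    (hcompact hpos).exists_isMaxOn ⟨x, hx, le_rfl⟩ (hv.1.mono fun z hz => hz.1)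
  have hmax : ∀ z ∈ D, v z ≤ v x₁ := fun z hz => by
    rcases le_total (v x) (v z) with h | h
    · exact hmax₁ ⟨hz, h⟩
    · exact h.trans hx₁.2
  obtain ⟨x₂, ⟨hx₂D, hx₂⟩, hfar⟩ := (hcompact (hpos.trans_le hx₁.2)).exists_isMaxOn
    ⟨x₁, hx₁.1, le_rfl⟩ (f := coord) (by fun_prop)
  obtain ⟨r, hr, hball⟩ := nhds_basis_closedBall.mem_iff.1 (hD.mem_nhds hx₂D)
  have hconst := hv.eq_of_forall_ball_le hr hball fun z hz =>
    (hmax z (hball (ball_subset_closedBall hz))).trans hx₂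
  let z : ES N := x₂ + EuclideanSpace.single ⟨0, hN⟩ (r / 2)
  have hz : z ∈ ball x₂ r := by
    simp only [z, mem_ball, dist_self_add_left, PiLp.norm_single, Real.norm_eq_abs,
      abs_of_pos (half_pos hr), half_lt_self hr]
  have hle : coord z ≤ coord x₂ :=
    hfar ⟨hball (ball_subset_closedBall hz), hx₂.trans (hconst z hz).ge⟩
  simp only [coord, z, PiLp.add_apply, PiLp.single_apply, if_true] at hle
  linarith

lemma IsSubmean.nonpos_of_frontier_inter (hN : 0 < N) {Ω U : Set (ES N)} (hΩ : IsOpen Ω)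
    (hU : IsOpen U) (hb : Bornology.IsBounded (Ω ∩ U)) {v : ES N → ℝ} (hv : IsSubmean (Ω ∩ U) v)
    (hbdry : ∀ z ∈ frontier Ω ∩ closure U, LimsupNonposAt (Ω ∩ U) v z)
    (hU_bdry : ∀ z ∈ Ω ∩ frontier U, LimsupNonposAt (Ω ∩ U) v z) : ∀ x ∈ Ω ∩ U, v x ≤ 0 := by
  refine hv.nonpos_of_frontier hN (hΩ.inter hU) hb fun z hz => ?_
  rcases frontier_inter_subset Ω U hz with h | h
  · exact hbdry z h
  · by_cases hzΩ : z ∈ Ω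
    · exact hU_bdry z ⟨hzΩ, h.2⟩
    · exact hbdry z ⟨hΩ.frontier_eq ▸ ⟨h.1, hzΩ⟩, frontier_subset_closure h.2⟩

lemma lap_exp_neg_mul_normSq_sub (k : ℝ) (e w : ES N) :
    lap (fun w : ES N => Real.exp (-k * ‖w - e‖ ^ 2)) w
      = Real.exp (-k * ‖w - e‖ ^ 2) * (2 * k * (2 * k * ‖w - e‖ ^ 2 - N)) := by
  have hderiv : ∀ c : ℝ, deriv (fun s : ℝ => c * Real.exp (-k * s))
      = fun s => -k * c * Real.exp (-k * s) := fun c => by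
    funext s
    have h := ((hasDerivAt_id s).const_mul (-k)).exp.const_mul c
    simp only [id] at h
    rw [h.deriv]
    ring
  have hlap := lap_comp_normSq_sub (Θ := fun s => 1 * Real.exp (-k * s)) (by fun_prop) e w
  rw [hderiv, hderiv] at hlap
  simp only [one_mul, mul_one] at hlap
  rw [hlap]
  ring

lemma isSubmean_exp_neg_mul_normSq_sub {k ρ : ℝ} (hk : 0 ≤ k) (hρ : 0 ≤ ρ)
    (hkρ : N ≤ 2 * k * ρ ^ 2) (e : ES N) :
    IsSubmean (ball e ρ)ᶜ (fun w => Real.exp (-k * ‖w - e‖ ^ 2)) := by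
  have hsmooth : ContDiff ℝ 2 (fun w : ES N => Real.exp (-k * ‖w - e‖ ^ 2)) :=
    (contDiff_const.mul ((contDiff_id.sub contDiff_const).norm_sq ℝ)).exp
  have hweak : IsWeakPoisson univ (fun w : ES N => Real.exp (-k * ‖w - e‖ ^ 2))
      (lap fun w : ES N => Real.exp (-k * ‖w - e‖ ^ 2)) :=
    ⟨hsmooth.continuous.continuousOn, fun φ hφ => by
      simpa only [Measure.restrict_univ] using
        integral_mul_lap_eq_integral_lap_mul hsmooth (contDiff_infty.1 hφ.1 2) hφ.2.1⟩
  refine ⟨hsmooth.continuous.continuousOn, fun x r hr hxr => ?_⟩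
  refine hweak.le_radialAvg isOpen_univ hr (subset_univ _) fun w hw => ?_
  have hdist : ρ ≤ ‖w - e‖ := by
    simpa only [mem_compl_iff, mem_ball, not_lt, dist_eq_norm] using
      hxr (ball_subset_closedBall hw)
  have hle : 2 * k * ρ ^ 2 ≤ 2 * k * ‖w - e‖ ^ 2 := by gcongr
  rw [lap_exp_neg_mul_normSq_sub]
  exact mul_nonneg (Real.exp_pos _).le (mul_nonneg (by positivity) (by linarith))

end MaximumPrinciple

section BoundaryDecay

variable {N : ℕ} {Ω : Set (ES N)} {y e : ES N} {ψ : ES N → ℝ} {Λ ε : ℝ}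

/-- Compare `v` with the Gaussian barrier `w ↦ exp (-k ρ ^ 2) - exp (-k ‖w - e‖ ^ 2)`, which is
superharmonic and nonnegative off `ball e ρ`. -/
lemma IsSubmean.mul_le_mul_barrier (hN : 0 < N) (hΩ : IsOpen Ω) {k ρ R S : ℝ} (hk : 0 ≤ k)
    (hρ : 0 ≤ ρ) (hkρ : N ≤ 2 * k * ρ ^ 2) (hρR : ρ ≤ R) (hS : 0 ≤ S)
    (hdisj : Ω ∩ ball e R ⊆ (ball e ρ)ᶜ) {v : ES N → ℝ} (hv : IsSubmean (Ω ∩ ball e R) v)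
    (hvS : ∀ w ∈ Ω ∩ ball e R, v w ≤ S)
    (hbdry : ∀ z ∈ frontier Ω ∩ closedBall e R, LimsupNonposAt Ω v z) :
    ∀ x ∈ Ω ∩ ball e R, (Real.exp (-k * ρ ^ 2) - Real.exp (-k * R ^ 2)) * v x
      ≤ S * (Real.exp (-k * ρ ^ 2) - Real.exp (-k * ‖x - e‖ ^ 2)) := by
  let E : ES N → ℝ := fun w => Real.exp (-k * ‖w - e‖ ^ 2)
  have hanti : ∀ {s t : ℝ}, 0 ≤ s → s ≤ t → Real.exp (-k * t ^ 2) ≤ Real.exp (-k * s ^ 2) := by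
    intro s t hs hst
    rw [Real.exp_le_exp, neg_mul, neg_mul, neg_le_neg_iff]
    gcongr
  set den := Real.exp (-k * ρ ^ 2) - Real.exp (-k * R ^ 2) with hden
  have hden0 : 0 ≤ den := sub_nonneg.2 (hanti hρ hρR)
  have hE : Continuous E := by fun_prop
  have hEρ : ∀ w ∈ Ω ∩ ball e R, E w ≤ Real.exp (-k * ρ ^ 2) := fun w hw => hanti hρ <| by
    simpa only [mem_compl_iff, mem_ball, not_lt, dist_eq_norm] using hdisj hw
  have hcmp : IsSubmean (Ω ∩ ball e R)
      fun w => den * v w + (S * E w + -(S * Real.exp (-k * ρ ^ 2))) :=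
    (hv.const_mul hden0).add
      ((((isSubmean_exp_neg_mul_normSq_sub hk hρ hkρ e).mono hdisj).const_mul hS).add (.const _ _))
  have hnonpos := hcmp.nonpos_of_frontier_inter hN hΩ isOpen_ball
    (isBounded_ball.subset inter_subset_right) ?_ ?_
  · intro x hx
    linarith [hnonpos x hx, mul_sub S (Real.exp (-k * ρ ^ 2)) (E x)]
  · intro z hz δ hδ
    have hz' := (hbdry z ⟨hz.1, closure_ball_subset_closedBall hz.2⟩).mono
      (inter_subset_left (t := ball e R)) (δ / (den + 1)) (by positivity)
    filter_upwards [hz', self_mem_nhdsWithin] with w hw hwD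
    have hvw : den * v w ≤ δ := by
      calc den * v w ≤ den * (δ / (den + 1)) := by gcongr
        _ ≤ (den + 1) * (δ / (den + 1)) := by gcongr; linarith
        _ = δ := by field_simp
    linarith [mul_le_mul_of_nonneg_left (hEρ w hwD) hS]
  · intro z hz δ hδ
    have hEz : E z = Real.exp (-k * R ^ 2) := by
      simp only [E, ← dist_eq_norm, mem_sphere.1 (frontier_ball_subset_sphere hz.2)]
    have hlim := ((hE.const_mul S).tendsto z).eventually_lt_const
      (show S * E z < S * Real.exp (-k * R ^ 2) + δ by rw [hEz]; linarith)
    filter_upwards [nhdsWithin_le_nhds hlim, self_mem_nhdsWithin] with w hw hwD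
    have hvw : den * v w ≤ den * S := by gcongr; exact hvS w hwD
    rw [hden] at hvw ⊢
    linarith

/-- A Lipschitz graph chart of `Ω` near the boundary point `y`: inside `ball y ε` the set `Ω` is
`{0 < ψ}`, where the height `ψ` is `Λ`-Lipschitz and grows with slope one in the direction `e`. -/
structure GraphChart (Ω : Set (ES N)) (y e : ES N) (ψ : ES N → ℝ) (Λ ε : ℝ) : Prop where
  isOpen : IsOpen Ω
  radius_pos : 0 < ε
  one_le : 1 ≤ Λ
  norm_dir : ‖e‖ = 1
  lipschitz : ∀ x w, |ψ x - ψ w| ≤ Λ * ‖x - w‖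
  height_add : ∀ x s, ψ (x + s • e) = ψ x + s
  mem_iff : ∀ x ∈ ball y ε, (x ∈ Ω ↔ 0 < ψ x)
  height_self : ψ y = 0

namespace GraphChart

lemma dim_pos (chart : GraphChart Ω y e ψ Λ ε) : 0 < N := by
  rcases N.eq_zero_or_pos with rfl | hN
  · have he := chart.norm_dir
    rw [Subsingleton.elim e 0, norm_zero] at he
    exact absurd he zero_ne_one
  · exact hN

lemma slope_pos (chart : GraphChart Ω y e ψ Λ ε) : 0 < Λ := one_pos.trans_le chart.one_le

lemma self_notMem (chart : GraphChart Ω y e ψ Λ ε) : y ∉ Ω := fun hy =>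
  ((chart.mem_iff y (mem_ball_self chart.radius_pos)).1 hy).ne' chart.height_self

lemma dist_add_smul (chart : GraphChart Ω y e ψ Λ ε) (x : ES N) (s : ℝ) :
    dist (x + s • e) x = |s| := by
  rw [dist_self_add_left, norm_smul, chart.norm_dir, mul_one, Real.norm_eq_abs]

lemma height_le_add (chart : GraphChart Ω y e ψ Λ ε) (x w : ES N) :
    ψ x ≤ ψ w + Λ * dist x w := by
  rw [dist_eq_norm]
  linarith [(abs_le.1 (chart.lipschitz x w)).2]

lemma height_le_mul_dist (chart : GraphChart Ω y e ψ Λ ε) (x : ES N) : ψ x ≤ Λ * dist x y := by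
  simpa only [chart.height_self, zero_add] using chart.height_le_add x y

lemma ball_subset (chart : GraphChart Ω y e ψ Λ ε) {x : ES N} {s : ℝ} (hs : Λ * s ≤ ψ x)
    (hball : ball x s ⊆ ball y ε) : ball x s ⊆ Ω := fun w hw => by
  have hdist : Λ * dist x w < Λ * s := by
    gcongr
    exacts [chart.slope_pos, mem_ball'.1 hw]
  exact (chart.mem_iff w (hball hw)).2 (by linarith [chart.height_le_add x w])

end GraphChart

/-- The factor by which a subharmonic function vanishing on a Lipschitz graph of slope `Λ` drops
when the distance to the graph is small compared with the radius. It is the value of the barrier of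
`IsSubmean.mul_le_mul_barrier` for the radii `h / Λ`, `2 * h` and `4 * h`. -/
def decayFactor (N : ℕ) (Λ : ℝ) : ℝ :=
  (Real.exp (-(N : ℝ)) - Real.exp (-(4 * N * Λ ^ 2))) /
    (Real.exp (-(N : ℝ)) - Real.exp (-(16 * N * Λ ^ 2)))

lemma exp_neg_sub_pos (hN : 0 < N) (hΛ : 1 ≤ Λ) {c : ℝ} (hc : 1 < c) :
    0 < Real.exp (-(N : ℝ)) - Real.exp (-(c * N * Λ ^ 2)) := by
  have hN' : (0 : ℝ) < N := Nat.cast_pos.2 hN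
  rw [sub_pos, Real.exp_lt_exp, neg_lt_neg_iff]
  calc (N : ℝ) < c * N := lt_mul_of_one_lt_left hN' hc
    _ ≤ c * N * Λ ^ 2 := le_mul_of_one_le_right (by positivity) (one_le_pow₀ hΛ)

lemma decayFactor_pos (hN : 0 < N) (hΛ : 1 ≤ Λ) : 0 < decayFactor N Λ :=
  div_pos (exp_neg_sub_pos hN hΛ (by norm_num)) (exp_neg_sub_pos hN hΛ (by norm_num))

lemma decayFactor_lt_one (hN : 0 < N) (hΛ : 1 ≤ Λ) : decayFactor N Λ < 1 := by
  have : (0 : ℝ) < N := Nat.cast_pos.2 hN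
  rw [decayFactor, div_lt_one (exp_neg_sub_pos hN hΛ (by norm_num)), sub_lt_sub_iff_left,
    Real.exp_lt_exp]
  gcongr
  norm_num

/-- The barrier is centred below the graph, at height at most `-h`. -/
theorem GraphChart.le_decayFactor_mul (chart : GraphChart Ω y e ψ Λ ε) {x : ES N} {h S : ℝ}
    (hx : x ∈ Ω) (hh : 0 < h) (hψ : ψ x ≤ h) (hball : ball x (7 * h) ⊆ ball y ε) {v : ES N → ℝ}
    (hv : IsSubmean (Ω ∩ ball x (7 * h)) v)
    (hbdry : ∀ z ∈ frontier Ω ∩ ball x (7 * h), LimsupNonposAt Ω v z) (hS : 0 ≤ S)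
    (hvS : ∀ w ∈ Ω ∩ ball x (7 * h), v w ≤ S) : v x ≤ decayFactor N Λ * S := by
  have hΛ := chart.slope_pos
  let c : ES N := x + (-(2 * h)) • e
  have hcx : dist x c = 2 * h := by
    rw [dist_comm, chart.dist_add_smul, abs_neg, abs_of_pos (by positivity)]
  have hclosed : closedBall c (4 * h) ⊆ ball x (7 * h) := fun w hw =>
    mem_ball.2 (by linarith [dist_triangle_right w x c, mem_closedBall.1 hw])
  have hopen : Ω ∩ ball c (4 * h) ⊆ Ω ∩ ball x (7 * h) :=
    inter_subset_inter_right _ (ball_subset_closedBall.trans hclosed)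
  have hdisj : Ω ∩ ball c (4 * h) ⊆ (ball c (h / Λ))ᶜ := fun w hw hwc => by
    have hwpos := (chart.mem_iff w (hball (hopen hw).2)).1 hw.1
    have hc : ψ c = ψ x + -(2 * h) := chart.height_add x _
    have hdist : Λ * dist w c < h := by
      rw [mul_comm]; exact (lt_div_iff₀ hΛ).1 hwc
    linarith [chart.height_le_add w c]
  have hle := (hv.mono hopen).mul_le_mul_barrier chart.dim_pos chart.isOpen
    (k := N * Λ ^ 2 / h ^ 2) (by positivity) (by positivity)
    (by field_simp; linarith [(Nat.cast_nonneg N : (0 : ℝ) ≤ N)])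
    ((div_le_self hh.le chart.one_le).trans (by linarith)) hS hdisj
    (fun w hw => hvS w (hopen hw)) (fun z hz => hbdry z ⟨hz.1, hclosed hz.2⟩) x
    ⟨hx, mem_ball.2 (by linarith)⟩
  have h1 : -(N * Λ ^ 2 / h ^ 2) * (h / Λ) ^ 2 = -(N : ℝ) := by field_simp
  have h2 : -(N * Λ ^ 2 / h ^ 2) * (2 * h) ^ 2 = -(4 * N * Λ ^ 2) := by field_simp; ring
  have h4 : -(N * Λ ^ 2 / h ^ 2) * (4 * h) ^ 2 = -(16 * N * Λ ^ 2) := by field_simp; ring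
  rw [← dist_eq_norm, hcx, h1, h2, h4] at hle
  rw [decayFactor, div_mul_eq_mul_div,
    le_div_iff₀ (exp_neg_sub_pos chart.dim_pos chart.one_le (by norm_num))]
  linarith

theorem GraphChart.le_decayFactor_pow_mul (chart : GraphChart Ω y e ψ Λ ε) {p : ES N} {h S R : ℝ}
    (hh : 0 < h) (hball : ball p R ⊆ ball y ε) {v : ES N → ℝ} (hv : IsSubmean (Ω ∩ ball p R) v)
    (hbdry : ∀ z ∈ frontier Ω ∩ ball p R, LimsupNonposAt Ω v z) (hS : 0 ≤ S)
    (hvS : ∀ w ∈ Ω ∩ ball p R, v w ≤ S) (hneg : ∀ w ∈ Ω ∩ ball p R, h < ψ w → v w ≤ 0) (j : ℕ) :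
    ∀ w ∈ Ω ∩ ball p (R - 7 * h * j), v w ≤ decayFactor N Λ ^ j * S := by
  have hθ := decayFactor_pos chart.dim_pos chart.one_le
  induction j with
  | zero => simpa only [CharP.cast_eq_zero, mul_zero, sub_zero, pow_zero, one_mul] using hvS
  | succ j ih =>
    intro w ⟨hwΩ, hw⟩
    have hwj : ball w (7 * h) ⊆ ball p (R - 7 * h * j) := ball_subset_ball' <| by
      rw [mem_ball, Nat.cast_succ] at hw
      linarith
    have hwR : ball w (7 * h) ⊆ ball p R := hwj.trans <| ball_subset_ball <|
      sub_le_self _ (by positivity)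
    by_cases hψ : h < ψ w
    · exact (hneg w ⟨hwΩ, hwR (mem_ball_self (by positivity))⟩ hψ).trans (by positivity)
    · rw [pow_succ', mul_assoc]
      exact chart.le_decayFactor_mul hwΩ hh (not_lt.1 hψ) (hwR.trans hball)
        (hv.mono (inter_subset_inter_right _ hwR)) (fun z hz => hbdry z ⟨hz.1, hwR hz.2⟩)
        (by positivity) fun z hz => ih z ⟨hz.1, hwj hz.2⟩

end BoundaryDecay

section Harnack

variable {N : ℕ} {Ω U : Set (ES N)}

lemma bumpProfile_quarter_pos : 0 < bumpProfile (1 / 4) := bumpProfile_pos (by norm_num)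

lemma le_bumpKernel {r : ℝ} (hr : 0 < r) {x w : ES N} (hw : w ∈ closedBall x (r / 2)) :
    (bumpMass N * r ^ N)⁻¹ * bumpProfile (1 / 4) ≤ bumpKernel r x w := by
  have hquarter : ‖w - x‖ ^ 2 / r ^ 2 ≤ 1 / 4 := by
    rw [mem_closedBall, dist_eq_norm] at hw
    rw [div_le_iff₀ (by positivity)]
    calc ‖w - x‖ ^ 2 ≤ (r / 2) ^ 2 := by gcongr
      _ = 1 / 4 * r ^ 2 := by ring
  have := bumpMass_pos (N := N)
  rw [bumpKernel]
  gcongr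
  exact antitone_bumpProfile hquarter

/-- A lower bound for the weight which `bumpKernel r x` gives to a ball of radius `κ * r` contained
in `ball x (r / 2)`. -/
def subballWeight (N : ℕ) (κ : ℝ) : ℝ :=
  κ ^ N * volume.real (ball (0 : ES N) 1) * bumpProfile (1 / 4) / bumpMass N

lemma subballWeight_pos {κ : ℝ} (hκ : 0 < κ) : 0 < subballWeight N κ := by
  have hvol : 0 < volume.real (ball (0 : ES N) 1) :=
    ENNReal.toReal_pos (measure_ball_pos _ _ one_pos).ne' measure_ball_lt_top.ne
  exact div_pos (mul_pos (mul_pos (pow_pos hκ N) hvol) bumpProfile_quarter_pos) bumpMass_pos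

theorem subballWeight_mul_le {w : ES N → ℝ} (hw : IsSubmean U fun x => -w x) {z x : ES N}
    {κ r m : ℝ} (hκ : 0 < κ) (hr : 0 < r) (hxr : closedBall x r ⊆ U)
    (hw0 : ∀ ξ ∈ ball x r, 0 ≤ w ξ) (hsub : ball z (κ * r) ⊆ ball x (r / 2)) (hm0 : 0 ≤ m)
    (hm : ∀ ξ ∈ ball z (κ * r), m ≤ w ξ) : subballWeight N κ * m ≤ w x := by
  have hvol : volume.real (ball z (κ * r)) = (κ * r) ^ N * volume.real (ball (0 : ES N) 1) := by
    rw [measureReal_def, measureReal_def, Measure.addHaar_ball_of_pos _ _ (by positivity),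
      ENNReal.toReal_mul, ENNReal.toReal_ofReal (by positivity), finrank_euclideanSpace_fin]
  have hintegr : Integrable fun ξ => bumpKernel r x ξ * w ξ := integrable_bumpKernel_mul hr <| by
    simpa only [neg_neg] using (hw.1.mono hxr).fun_neg
  have hmean : ∫ ξ, bumpKernel r x ξ * w ξ ≤ w x := by
    have := hw.2 x r hr hxr
    simp only [radialAvg, mul_neg, integral_neg] at this
    exact neg_le_neg_iff.1 this
  calc subballWeight N κ * m
      = ∫ _ in ball z (κ * r), (bumpMass N * r ^ N)⁻¹ * bumpProfile (1 / 4) * m := by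
        rw [setIntegral_const, smul_eq_mul, hvol, subballWeight]
        have := (bumpMass_pos (N := N)).ne'
        field_simp
        ring
    _ ≤ ∫ ξ in ball z (κ * r), bumpKernel r x ξ * w ξ := by
        refine setIntegral_mono_on (integrableOn_const measure_ball_lt_top.ne) hintegr.integrableOn
          measurableSet_ball fun ξ hξ => ?_
        exact mul_le_mul (le_bumpKernel hr (ball_subset_closedBall (hsub hξ))) (hm ξ hξ) hm0
          (bumpKernel_nonneg hr x ξ)
    _ ≤ ∫ ξ, bumpKernel r x ξ * w ξ := by
        refine setIntegral_le_integral hintegr (Eventually.of_forall fun ξ => ?_)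
        by_cases hξ : ξ ∈ ball x r
        · exact mul_nonneg (bumpKernel_nonneg hr x ξ) (hw0 ξ hξ)
        · simp only [bumpKernel_eq_zero hr hξ, zero_mul, Pi.zero_apply, le_refl]
    _ ≤ w x := hmean

/-- `u` is positive on `Ω` and satisfies the Harnack inequality with constant `H` for pairs of
points which are close compared with their distance to `Ωᶜ`. -/
structure IsHarnack (Ω : Set (ES N)) (u : ES N → ℝ) (H : ℝ) : Prop where
  pos : ∀ x ∈ Ω, 0 < u x
  one_le : 1 ≤ H
  le_mul : ∀ (z z' : ES N) (s : ℝ), 0 < s → ball z s ⊆ Ω → ball z' s ⊆ Ω → dist z z' ≤ s / 16 →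
    u z ≤ H * u z'

/-- The bound for the ratio of two bump kernels whose radii differ by a factor of four. -/
def kernelRatio (N : ℕ) : ℝ := 4 ^ N * bumpProfile 0 / bumpProfile (1 / 4)

lemma one_le_kernelRatio (N : ℕ) : 1 ≤ kernelRatio N := by
  rw [kernelRatio, one_le_div bumpProfile_quarter_pos]
  have hanti : bumpProfile (1 / 4) ≤ bumpProfile 0 := antitone_bumpProfile (by norm_num)
  exact hanti.trans (le_mul_of_one_le_left (bumpProfile_nonneg 0) (one_le_pow₀ (by norm_num)))

lemma bumpKernel_le_kernelRatio_mul {r : ℝ} (hr : 0 < r) {z z' : ES N} (h : dist z z' ≤ r)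
    (w : ES N) : bumpKernel r z w ≤ kernelRatio N * bumpKernel (4 * r) z' w := by
  have h4r : 0 < 4 * r := by positivity
  have hratio : 0 ≤ kernelRatio N := zero_le_one.trans (one_le_kernelRatio N)
  have hmass := bumpMass_pos (N := N)
  by_cases hw : w ∈ ball z r
  · have hw' : w ∈ closedBall z' (4 * r / 2) :=
      mem_closedBall.2 (by linarith [dist_triangle w z z', mem_ball.1 hw])
    calc bumpKernel r z w ≤ (bumpMass N * r ^ N)⁻¹ * bumpProfile 0 := by
          rw [bumpKernel]
          gcongr
          exact antitone_bumpProfile (by positivity)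
      _ = kernelRatio N * ((bumpMass N * (4 * r) ^ N)⁻¹ * bumpProfile (1 / 4)) := by
          have := bumpProfile_quarter_pos.ne'
          rw [kernelRatio, mul_pow]
          field_simp
      _ ≤ kernelRatio N * bumpKernel (4 * r) z' w := by
          gcongr
          exact le_bumpKernel h4r hw'
  · rw [bumpKernel_eq_zero hr hw]
    exact mul_nonneg hratio (bumpKernel_nonneg h4r z' w)

lemma radialAvg_le_kernelRatio_mul {r : ℝ} (hr : 0 < r) {z z' : ES N} (h : dist z z' ≤ r)
    {u : ES N → ℝ} (hz : ContinuousOn u (closedBall z r))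
    (hz' : ContinuousOn u (closedBall z' (4 * r))) (hu0 : ∀ w ∈ ball z' (4 * r), 0 ≤ u w) :
    radialAvg u z r ≤ kernelRatio N * radialAvg u z' (4 * r) := by
  have h4r : 0 < 4 * r := by positivity
  rw [radialAvg, radialAvg, ← integral_const_mul]
  refine integral_mono (integrable_bumpKernel_mul hr hz)
    ((integrable_bumpKernel_mul h4r hz').const_mul _) fun w => ?_
  by_cases hw : w ∈ ball z' (4 * r)
  · simp only [← mul_assoc]
    exact mul_le_mul_of_nonneg_right (bumpKernel_le_kernelRatio_mul hr h w) (hu0 w hw)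
  · have hwz : w ∉ ball z r := fun hwz =>
      hw (mem_ball.2 (by linarith [dist_triangle w z z', mem_ball.1 hwz]))
    simp only [bumpKernel_eq_zero hr hwz, bumpKernel_eq_zero h4r hw, zero_mul, mul_zero, le_refl]

lemma VClass.le_of_mem_ball {V : ES N → ℝ} {a : ℝ} (hV : VClass Ω a V) (hne : Ωᶜ.Nonempty)
    {z w : ES N} {s : ℝ} (hs : 0 < s) (hz : ball z s ⊆ Ω) (hw : w ∈ ball z (s / 2)) :
    V w ≤ 4 * a / s ^ 2 := by
  have hdist : s / 2 ≤ dista Ω w := (le_infDist hne).2 fun q hq => by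
    have hqz : s ≤ dist q z := not_lt.1 fun h => hq (hz (mem_ball.2 h))
    linarith [dist_triangle_left q z w, mem_ball.1 hw]
  obtain ⟨hV0, hVa⟩ := hV.2 w (hz (ball_subset_ball (half_le_self hs.le) hw))
  rw [le_div_iff₀ (by positivity)]
  calc V w * s ^ 2 = 4 * (V w * (s / 2) ^ 2) := by ring
    _ ≤ 4 * (V w * dista Ω w ^ 2) := by gcongr
    _ ≤ 4 * a := by gcongr

/-- The Harnack constant for potentials bounded by `a / δ_Ω ^ 2`. -/
def harnackConst (N : ℕ) (a : ℝ) : ℝ := kernelRatio N * Real.exp (a / 16)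

theorem VClass.isHarnack {V u : ES N → ℝ} {a : ℝ} (hV : VClass Ω a V) (ha : 0 ≤ a)
    (hΩ : IsOpen Ω) (hne : Ωᶜ.Nonempty) (hu : IsWeakPoisson Ω u fun x => V x * u x)
    (hpos : ∀ x ∈ Ω, 0 < u x) : IsHarnack Ω u (harnackConst N a) := by
  refine ⟨hpos, one_le_mul_of_one_le_of_one_le (one_le_kernelRatio N)
    (Real.one_le_exp (by positivity)), fun z z' s hs hz hz' hzz' => ?_⟩
  have hVu : ∀ w ∈ Ω, 0 ≤ V w * u w := fun w hw => mul_nonneg (hV.2 w hw).1 (hpos w hw).le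
  have hcz : closedBall z (s / 16) ⊆ Ω := (closedBall_subset_ball (by linarith)).trans hz
  have hcz' : closedBall z' (s / 4) ⊆ Ω := (closedBall_subset_ball (by linarith)).trans hz'
  have hsub : u z ≤ radialAvg u z (s / 16) := hu.le_radialAvg hΩ (by positivity) hcz
    fun w hw => hVu w (hcz (ball_subset_closedBall hw))
  have hsuper : radialAvg u z' (s / 4) ≤ Real.exp (a / 16) * u z' := by
    have hexp : 4 * a / s ^ 2 * (s / 4) ^ 2 / 4 = a / 16 := by field_simp; ring
    rw [← hexp]
    refine hu.radialAvg_le hΩ (by positivity) hcz'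
      (fun w hw => hVu w (hcz' (ball_subset_closedBall hw))) fun w hw => ?_
    gcongr
    · exact (hpos w (hcz' (ball_subset_closedBall hw))).le
    · exact hV.le_of_mem_ball hne hs hz' (ball_subset_ball (by linarith) hw)
  have hcompare : radialAvg u z (s / 16) ≤ kernelRatio N * radialAvg u z' (s / 4) := by
    have hs4 : s / 4 = 4 * (s / 16) := by ring
    rw [hs4] at hcz' ⊢
    exact radialAvg_le_kernelRatio_mul (by positivity) hzz' (hu.1.mono hcz) (hu.1.mono hcz')
      fun w hw => (hpos w (hcz' (ball_subset_closedBall hw))).le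
  have hratio : 0 ≤ kernelRatio N := zero_le_one.trans (one_le_kernelRatio N)
  calc u z ≤ kernelRatio N * radialAvg u z' (s / 4) := hsub.trans hcompare
    _ ≤ kernelRatio N * (Real.exp (a / 16) * u z') := by gcongr
    _ = harnackConst N a * u z' := by rw [harnackConst, mul_assoc]

end Harnack

section LowerBoundIteration

variable {N : ℕ} {Ω : Set (ES N)} {y e : ES N} {ψ : ES N → ℝ} {Λ ε : ℝ}

/-- Two lower bounds for `w` on `Ω ∩ ball p R`: by `-m` everywhere, and by `M` above height `h`. -/
structure LowerBounds (Ω : Set (ES N)) (ψ : ES N → ℝ) (p : ES N) (R h M m : ℝ)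
    (w : ES N → ℝ) : Prop where
  of_le : ∀ z ∈ Ω ∩ ball p R, h ≤ ψ z → M ≤ w z
  neg_le : ∀ z ∈ Ω ∩ ball p R, -m ≤ w z

/-- The ratio of consecutive radii in the iteration behind `GraphChart.nonneg_add_smul`. -/
def radiusRatio (Λ : ℝ) : ℝ := 1 - 1 / (16 * Λ)

lemma radiusRatio_lt_one (hΛ : 0 < Λ) : radiusRatio Λ < 1 := sub_lt_self _ (by positivity)

lemma le_radiusRatio (hΛ : 1 ≤ Λ) : 15 / 16 ≤ radiusRatio Λ := by
  have hτ : 1 / (16 * Λ) ≤ 1 / 16 := one_div_le_one_div_of_le (by norm_num) (by linarith)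
  rw [radiusRatio]
  linarith

/-- Just below the height `h`, a fixed proportion of a ball about `x` lies above that height. -/
theorem LowerBounds.subballWeight_mul_le (chart : GraphChart Ω y e ψ Λ ε) {p x : ES N}
    {h m M R : ℝ} {w : ES N → ℝ} (hb : LowerBounds Ω ψ p R h M m w) (hh : 0 < h)
    (hball : ball p R ⊆ ball y ε) (hw : IsSubmean (Ω ∩ ball p R) fun x => -w x)
    (hx : ball x h ⊆ ball p R) (hψ : radiusRatio Λ * h ≤ ψ x) (hMm : 0 ≤ M + m) :
    subballWeight N (1 / (8 * Λ)) * (M + m) ≤ w x + m := by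
  have hΛ := chart.slope_pos
  have hΛ1 := chart.one_le
  set r := h / (2 * Λ) with hr
  have hr0 : 0 < r := by positivity
  have hΛr : Λ * r = h / 2 := by rw [hr]; field_simp
  have hrh : r ≤ h / 2 := by rw [← hΛr]; exact le_mul_of_one_le_left hr0.le hΛ1
  have hκ : 1 / (8 * Λ) * r = r / (8 * Λ) := by ring
  have hκr : r / (8 * Λ) ≤ r / 8 := div_le_div_of_nonneg_left hr0.le (by norm_num) (by linarith)
  have hsub : closedBall x r ⊆ Ω ∩ ball p R := by
    have hxh : closedBall x r ⊆ ball x (3 / 2 * r) := closedBall_subset_ball (by linarith)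
    have hhx : ball x (3 / 2 * r) ⊆ ball x h := ball_subset_ball (by linarith)
    refine hxh.trans (subset_inter (chart.ball_subset ?_ (hhx.trans (hx.trans hball)))
      (hhx.trans hx))
    calc Λ * (3 / 2 * r) = 3 / 4 * h := by rw [mul_left_comm, hΛr]; ring
      _ ≤ radiusRatio Λ * h := by gcongr; linarith [le_radiusRatio hΛ1]
      _ ≤ ψ x := hψ
  let z := x + (r / 4) • e
  have hzx : dist z x = r / 4 := by rw [chart.dist_add_smul, abs_of_pos (by positivity)]
  have hzball : ball z (1 / (8 * Λ) * r) ⊆ ball x (r / 2) :=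
    ball_subset_ball' (by rw [hzx, hκ]; linarith)
  have hwm : IsSubmean (Ω ∩ ball p R) fun ξ => -(w ξ + m) := by
    simpa only [neg_add] using hw.add (.const _ (-m))
  refine Anc.subballWeight_mul_le hwm (by positivity) hr0 hsub
    (fun ξ hξ => by linarith [hb.neg_le ξ (hsub (ball_subset_closedBall hξ))]) hzball hMm
    fun ξ hξ => ?_
  have hξx : ξ ∈ closedBall x r :=
    ball_subset_closedBall (ball_subset_ball (by linarith) (hzball hξ))
  have hheight : h ≤ ψ ξ := by
    have hz : ψ z = ψ x + r / 4 := chart.height_add x _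
    have hdist : Λ * dist z ξ ≤ r / 8 := by
      calc Λ * dist z ξ ≤ Λ * (1 / (8 * Λ) * r) := by gcongr; exact (mem_ball'.1 hξ).le
        _ = r / 8 := by field_simp
    have hratio : radiusRatio Λ * h = h - r / 8 := by rw [radiusRatio, hr]; field_simp; ring
    linarith [chart.height_le_add z ξ]
  linarith [hb.of_le ξ (hsub hξx) hheight]

theorem LowerBounds.step (chart : GraphChart Ω y e ψ Λ ε) {p : ES N} {q δ M R : ℝ} {j : ℕ}
    {w : ES N → ℝ} (hb : LowerBounds Ω ψ p R (δ * R) M (q * M) w) (hq : 0 < q) (hq1 : q ≤ 1)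
    (hqN : 2 * q ≤ subballWeight N (1 / (8 * Λ))) (hj : decayFactor N Λ ^ j ≤ q) (hδ : 0 < δ)
    (hδj : 7 * δ * (j + 1) ≤ 1 / (16 * Λ)) (hR : 0 < R) (hM : 0 < M)
    (hball : ball p R ⊆ ball y ε) (hw : IsSubmean (Ω ∩ ball p R) fun x => -w x)
    (hbdry : ∀ z ∈ frontier Ω ∩ ball p R, LimsupNonposAt Ω (fun x => -w x) z) :
    LowerBounds Ω ψ p (radiusRatio Λ * R) (δ * (radiusRatio Λ * R)) (q * M) (q * (q * M)) w := by
  have hδj0 : 0 ≤ δ * j := by positivity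
  have hqM : 0 < q * M := mul_pos hq hM
  have hratio : radiusRatio Λ * R = R - 1 / (16 * Λ) * R := by rw [radiusRatio]; ring
  constructor
  · intro z hz hψ
    have hzR : ball z (δ * R) ⊆ ball p R := by
      have hδR : δ * R ≤ 1 / (16 * Λ) * R := by gcongr; linarith
      exact ball_subset_ball' (by linarith [mem_ball.1 hz.2])
    by_cases hhigh : δ * R ≤ ψ z
    · exact (mul_le_of_le_one_left hM.le hq1).trans
        (hb.of_le z ⟨hz.1, hzR (mem_ball_self (by positivity))⟩ hhigh)
    · have hlow := hb.subballWeight_mul_le chart (by positivity) hball hw hzR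
        (by linarith) (by positivity)
      have hweight : 2 * q * (M + q * M) ≤ subballWeight N (1 / (8 * Λ)) * (M + q * M) := by gcongr
      have := mul_pos hq hqM
      linarith
  · intro z hz
    have hzj : z ∈ ball p (R - 7 * (δ * R) * j) := by
      refine ball_subset_ball ?_ hz.2
      have : 7 * δ * j * R ≤ 1 / (16 * Λ) * R := by gcongr; linarith
      linarith
    have hdecay := chart.le_decayFactor_pow_mul (by positivity) hball hw hbdry hqM.le
      (fun x hx => neg_le_of_neg_le (hb.neg_le x hx))
      (fun x hx hψ => neg_nonpos.2 (hM.le.trans (hb.of_le x hx hψ.le))) j z ⟨hz.1, hzj⟩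
    have hqj : decayFactor N Λ ^ j * (q * M) ≤ q * (q * M) := by gcongr
    linarith

theorem LowerBounds.iterate (chart : GraphChart Ω y e ψ Λ ε) {p : ES N} {q δ R : ℝ} {j : ℕ}
    {w : ES N → ℝ} (hb : LowerBounds Ω ψ p R (δ * R) 1 q w) (hq : 0 < q) (hq1 : q ≤ 1)
    (hqN : 2 * q ≤ subballWeight N (1 / (8 * Λ))) (hj : decayFactor N Λ ^ j ≤ q) (hδ : 0 < δ)
    (hδj : 7 * δ * (j + 1) ≤ 1 / (16 * Λ)) (hR : 0 < R) (hball : ball p R ⊆ ball y ε)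
    (hw : IsSubmean (Ω ∩ ball p R) fun x => -w x)
    (hbdry : ∀ z ∈ frontier Ω ∩ ball p R, LimsupNonposAt Ω (fun x => -w x) z) (k : ℕ) :
    LowerBounds Ω ψ p (radiusRatio Λ ^ k * R) (δ * (radiusRatio Λ ^ k * R)) (q ^ k) (q * q ^ k)
      w := by
  have hratio : 0 < radiusRatio Λ := by linarith [le_radiusRatio chart.one_le]
  induction k with
  | zero => simpa only [pow_zero, one_mul, mul_one] using hb
  | succ k ih =>
    have hsub : ball p (radiusRatio Λ ^ k * R) ⊆ ball p R := ball_subset_ball <|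
      mul_le_of_le_one_left hR.le (pow_le_one₀ hratio.le (radiusRatio_lt_one chart.slope_pos).le)
    rw [pow_succ' q, pow_succ' (radiusRatio Λ), mul_assoc (radiusRatio Λ)]
    exact ih.step chart hq hq1 hqN hj hδ hδj (by positivity) (by positivity) (hsub.trans hball)
      (hw.mono (inter_subset_inter_right _ hsub)) fun z hz => hbdry z ⟨hz.1, hsub hz.2⟩

/-- The boundary point `p` may be chosen freely, so this controls the sign of `w` at every point of
`Ω` near `p`: a function which is large away from the graph absorbs a small negative part. -/
theorem GraphChart.nonneg_add_smul (chart : GraphChart Ω y e ψ Λ ε) :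
    ∃ δ q : ℝ, 0 < δ ∧ δ ≤ 1 / 8 ∧ 0 < q ∧ ∀ (p : ES N) (R : ℝ) (w : ES N → ℝ), ψ p = 0 →
      ball p R ⊆ ball y ε → IsSubmean (Ω ∩ ball p R) (fun x => -w x) →
      (∀ z ∈ frontier Ω ∩ ball p R, LimsupNonposAt Ω (fun x => -w x) z) →
      LowerBounds Ω ψ p R (δ * R) 1 q w → ∀ s, 0 < s → s < R → 0 ≤ w (p + s • e) := by
  have hΛ := chart.one_le
  have hΛ0 := chart.slope_pos
  have hratio := le_radiusRatio hΛ
  let q := min 1 (subballWeight N (1 / (8 * Λ)) / 2)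
  have hq0 : 0 < q := lt_min one_pos (half_pos (subballWeight_pos (by positivity)))
  have hqN : 2 * q ≤ subballWeight N (1 / (8 * Λ)) := by
    linarith [min_le_right 1 (subballWeight N (1 / (8 * Λ)) / 2)]
  obtain ⟨j, hj⟩ := exists_pow_lt_of_lt_one hq0 (decayFactor_lt_one chart.dim_pos hΛ)
  set δ := 1 / (112 * Λ * (j + 1)) with hδ
  have hδ0 : 0 < δ := by positivity
  have hδj : 7 * δ * (j + 1) ≤ 1 / (16 * Λ) := le_of_eq (by rw [hδ]; field_simp; norm_num)
  have hδ8 : δ ≤ 1 / 8 := by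
    refine one_div_le_one_div_of_le (by norm_num) ?_
    nlinarith [mul_nonneg hΛ0.le j.cast_nonneg]
  refine ⟨δ, q, hδ0, hδ8, hq0, fun p R w hp hball hw hbdry hb s hs hsR => ?_⟩
  have hR : 0 < R := hs.trans hsR
  have hψ : ψ (p + s • e) = s := by rw [chart.height_add, hp, zero_add]
  have hdist : dist (p + s • e) p = s := by rw [chart.dist_add_smul, abs_of_pos hs]
  have hmem : p + s • e ∈ Ω :=
    (chart.mem_iff _ (hball (by rwa [mem_ball, hdist]))).2 (by rwa [hψ])
  obtain ⟨t, hst, ht⟩ := exists_between (lt_min hsR (by linarith : s < 2 * s))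
  obtain ⟨htR, hts⟩ := lt_min_iff.1 ht
  obtain ⟨k, hk, htk⟩ := exists_nat_pow_near_of_lt_one (div_pos (hs.trans hst) hR)
    ((div_le_one hR).2 htR.le) (by linarith : 0 < radiusRatio Λ) (radiusRatio_lt_one hΛ0)
  rw [div_le_iff₀ hR] at htk
  rw [lt_div_iff₀ hR, pow_succ', mul_assoc] at hk
  have hheight : δ * (radiusRatio Λ ^ k * R) ≤ s := by
    calc δ * (radiusRatio Λ ^ k * R) ≤ radiusRatio Λ / 2 * (radiusRatio Λ ^ k * R) := by
          gcongr
          linarith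
      _ ≤ s := by linarith
  exact (pow_nonneg hq0.le k).trans <| (hb.iterate chart hq0 (min_le_left _ _) hqN hj.le hδ0 hδj hR
    hball hw hbdry k).of_le _ ⟨hmem, by rw [mem_ball, hdist]; linarith⟩ (by rwa [hψ])

end LowerBoundIteration

section HarnackChain

variable {N : ℕ} {Ω : Set (ES N)} {y e : ES N} {ψ u : ES N → ℝ} {Λ ε H : ℝ}

theorem IsHarnack.le_pow_mul_of_segment (hu : IsHarnack Ω u H) {z z' : ES N} {s : ℝ} (hs : 0 < s)
    {n : ℕ} (hball : ∀ x ∈ segment ℝ z z', ball x s ⊆ Ω) (hdist : dist z z' ≤ n * (s / 16)) :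
    u z ≤ H ^ n * u z' := by
  have hH : 0 < H := one_pos.trans_le hu.one_le
  rcases n.eq_zero_or_pos with rfl | hn
  · have hzz' : z = z' := dist_le_zero.1 (by simpa only [CharP.cast_eq_zero, zero_mul] using hdist)
    rw [hzz', pow_zero, one_mul]
  have hn' : (0 : ℝ) < n := Nat.cast_pos.2 hn
  let x : ℕ → ES N := fun k => AffineMap.lineMap z z' ((k : ℝ) / n)
  have hx : ∀ k ≤ n, ball (x k) s ⊆ Ω := fun k hk => hball _ <| by
    rw [segment_eq_image_lineMap]
    exact mem_image_of_mem _ ⟨by positivity, (div_le_one hn').2 (Nat.cast_le.2 hk)⟩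
  have hstep : ∀ k, dist (x k) (x (k + 1)) ≤ s / 16 := fun k => by
    have hk : dist ((k : ℝ) / n) ((k + 1 : ℕ) / n) = 1 / n := by
      rw [Nat.cast_succ, add_div, dist_self_add_right, Real.norm_of_nonneg (by positivity)]
    rw [dist_lineMap_lineMap, hk, one_div, inv_mul_le_iff₀ hn']
    exact hdist
  have hchain : ∀ k ≤ n, u z ≤ H ^ k * u (x k) := by
    intro k
    induction k with
    | zero => simp only [x, CharP.cast_eq_zero, zero_div, AffineMap.lineMap_apply_zero, pow_zero,
        one_mul, le_refl, implies_true]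
    | succ k ih =>
      intro hk
      have hk' := Nat.le_of_succ_le hk
      calc u z ≤ H ^ k * u (x k) := ih hk'
        _ ≤ H ^ k * (H * u (x (k + 1))) := by
            gcongr
            exact hu.le_mul _ _ s hs (hx k hk') (hx (k + 1) hk) (hstep k)
        _ = H ^ (k + 1) * u (x (k + 1)) := by rw [pow_succ, mul_assoc]
  simpa only [x, div_self hn'.ne', AffineMap.lineMap_apply_one] using hchain n le_rfl

namespace GraphChart

lemma ball_div_subset (chart : GraphChart Ω y e ψ Λ ε) {x : ES N} {h : ℝ} (hh : 0 ≤ h)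
    (hψ : h ≤ ψ x) (hε : dist x y + h ≤ ε) : ball x (h / Λ) ⊆ Ω := by
  have hΛ := chart.slope_pos
  refine chart.ball_subset (by rwa [mul_div_cancel₀ _ hΛ.ne']) (ball_subset_ball' ?_)
  linarith [div_le_self hh chart.one_le]

lemma dist_add_smul_le (chart : GraphChart Ω y e ψ Λ ε) (x w : ES N) {t : ℝ} (ht : 0 ≤ t) :
    dist (x + t • e) w ≤ dist x w + t := by
  have := dist_triangle (x + t • e) x w
  rw [chart.dist_add_smul, abs_of_nonneg ht] at this
  linarith

lemma ball_subset_of_mem_vertical_segment (chart : GraphChart Ω y e ψ Λ ε) {z x : ES N}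
    {h t : ℝ} (hh : 0 ≤ h) (ht : 0 ≤ t) (hψ : h ≤ ψ z) (hε : dist z y + t + h ≤ ε)
    (hx : x ∈ segment ℝ z (z + t • e)) : ball x (h / Λ) ⊆ Ω := by
  rw [segment_eq_image'] at hx
  obtain ⟨s, ⟨hs0, hs1⟩, rfl⟩ := hx
  simp only [add_sub_cancel_left, smul_smul]
  have hst0 : 0 ≤ s * t := mul_nonneg hs0 ht
  have hst : s * t ≤ t := mul_le_of_le_one_left ht hs1
  refine chart.ball_div_subset hh ?_ ?_
  · rw [chart.height_add]
    linarith
  · linarith [chart.dist_add_smul_le z y hst0]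

lemma ball_subset_of_mem_lifted_segment (chart : GraphChart Ω y e ψ Λ ε) {z z' x : ES N}
    {h t ρ : ℝ} (hh : 0 ≤ h) (ht : Λ * dist z z' ≤ t) (hz : z ∈ closedBall y ρ)
    (hz' : z' ∈ closedBall y ρ) (hψ : h ≤ ψ z) (hε : ρ + t + h ≤ ε)
    (hx : x ∈ segment ℝ (z + t • e) (z' + t • e)) : ball x (h / Λ) ⊆ Ω := by
  have hΛ := chart.slope_pos
  have ht0 : 0 ≤ t := (mul_nonneg hΛ.le dist_nonneg).trans ht
  obtain ⟨w, rfl⟩ : ∃ w, w + t • e = x := ⟨x - t • e, sub_add_cancel _ _⟩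
  rw [add_comm z, add_comm z', add_comm w, mem_segment_translate] at hx
  have hw : dist w y ≤ ρ := (convex_closedBall y ρ).segment_subset hz hz' hx
  have hzw : Λ * dist z w ≤ t := by
    refine le_trans ?_ ht
    gcongr
    linarith [dist_add_dist_of_mem_segment hx, dist_nonneg (x := w) (y := z')]
  refine chart.ball_div_subset hh ?_ ?_
  · rw [chart.height_add]
    linarith [chart.height_le_add z w]
  · linarith [chart.dist_add_smul_le w y ht0]

end GraphChart

theorem IsHarnack.le_pow_mul_of_le_height (hu : IsHarnack Ω u H) (chart : GraphChart Ω y e ψ Λ ε)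
    {z z' : ES N} {h ρ : ℝ} {n : ℕ} (hh : 0 < h) (hn : 32 * Λ ^ 2 * ρ ≤ n * h)
    (hε : ρ + 2 * Λ * ρ + h ≤ ε) (hz : z ∈ closedBall y ρ) (hz' : z' ∈ closedBall y ρ)
    (hψ : h ≤ ψ z) (hψ' : h ≤ ψ z') : u z ≤ (H ^ n) ^ 3 * u z' := by
  have hΛ := chart.slope_pos
  have hH : 0 < H := one_pos.trans_le hu.one_le
  have hρ : 0 ≤ ρ := dist_nonneg.trans hz
  set t := 2 * Λ * ρ with ht
  have ht0 : 0 ≤ t := by positivity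
  have hs : 0 < h / Λ := by positivity
  have hdist : dist z z' ≤ 2 * ρ := by
    linarith [dist_triangle_right z z' y, mem_closedBall.1 hz, mem_closedBall.1 hz']
  have hρt : 2 * ρ ≤ t := by
    rw [ht, mul_right_comm]
    exact le_mul_of_one_le_right (by positivity) chart.one_le
  have htn : t ≤ n * (h / Λ / 16) := by
    rw [ht]
    field_simp
    linarith
  have hup : ∀ x, dist (x + t • e) x = t := fun x => by
    rw [chart.dist_add_smul, abs_of_nonneg ht0]
  calc u z ≤ H ^ n * u (z + t • e) :=
        hu.le_pow_mul_of_segment hs (fun x => chart.ball_subset_of_mem_vertical_segment hh.le ht0 hψ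
          (by linarith [mem_closedBall.1 hz])) (by rwa [dist_comm, hup])
    _ ≤ H ^ n * (H ^ n * u (z' + t • e)) := by
        gcongr
        refine hu.le_pow_mul_of_segment hs (fun x => chart.ball_subset_of_mem_lifted_segment hh.le
          ?_ hz hz' hψ hε) (by rw [dist_add_right]; linarith)
        calc Λ * dist z z' ≤ Λ * (2 * ρ) := by gcongr
          _ = t := by rw [ht]; ring
    _ ≤ H ^ n * (H ^ n * (H ^ n * u z')) := by
        gcongr
        refine hu.le_pow_mul_of_segment hs (fun x hx => ?_) (by rwa [hup])
        exact chart.ball_subset_of_mem_vertical_segment hh.le ht0 hψ'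
          (by linarith [mem_closedBall.1 hz']) (segment_symm ℝ _ z' ▸ hx)
    _ = (H ^ n) ^ 3 * u z' := by ring

theorem IsHarnack.exists_forall_le_mul (hu : IsHarnack Ω u H) (chart : GraphChart Ω y e ψ Λ ε)
    {σ A : ℝ} (hσ : 0 < σ) : ∃ C B : ℝ, 0 < C ∧ ∀ r, 0 < r → B * r ≤ ε →
      ∀ z ∈ ball y (A * r), ∀ z' ∈ ball y (A * r), σ * r ≤ ψ z → σ * r ≤ ψ z' →
        u z ≤ C * u z' := by
  have hH : 0 < H := one_pos.trans_le hu.one_le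
  obtain ⟨n, hn⟩ := exists_nat_ge (32 * Λ ^ 2 * A / σ)
  rw [div_le_iff₀ hσ] at hn
  refine ⟨(H ^ n) ^ 3, A + 2 * Λ * A + σ, by positivity,
    fun r hr hrε z hz z' hz' hψ hψ' => ?_⟩
  refine hu.le_pow_mul_of_le_height chart (ρ := A * r) (by positivity) ?_ (by linarith)
    (ball_subset_closedBall hz) (ball_subset_closedBall hz') hψ hψ'
  rw [← mul_assoc, ← mul_assoc]
  gcongr

/-- The ratio of the heights of consecutive points in the Harnack chain which climbs from a point
near the graph. -/
def climbRatio (Λ : ℝ) : ℝ := 1 + 1 / (16 * Λ)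

lemma one_lt_climbRatio (hΛ : 0 < Λ) : 1 < climbRatio Λ := lt_add_of_pos_right 1 (by positivity)

lemma climbRatio_le_two (hΛ : 1 ≤ Λ) : climbRatio Λ ≤ 2 := by
  have hτ : 1 / (16 * Λ) ≤ 1 := (div_le_one (by positivity)).2 (by linarith)
  rw [climbRatio]
  linarith

lemma IsHarnack.le_mul_climb (hu : IsHarnack Ω u H) (chart : GraphChart Ω y e ψ Λ ε) {x : ES N}
    (hx : 0 < ψ x) (hε : dist x y + 2 * ψ x ≤ ε) :
    u x ≤ H * u (x + ((climbRatio Λ - 1) * ψ x) • e) := by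
  have hΛ := chart.slope_pos
  have hclimb := one_lt_climbRatio hΛ
  have hclimb' := climbRatio_le_two chart.one_le
  have ht0 : 0 ≤ (climbRatio Λ - 1) * ψ x := mul_nonneg (by linarith) hx.le
  have ht : (climbRatio Λ - 1) * ψ x ≤ ψ x := mul_le_of_le_one_left hx.le (by linarith)
  refine hu.le_mul _ _ (ψ x / Λ) (by positivity)
    (chart.ball_div_subset hx.le le_rfl (by linarith))
    (chart.ball_div_subset hx.le ?_ (by linarith [chart.dist_add_smul_le x y ht0])) ?_
  · rw [chart.height_add]
    linarith
  · rw [dist_comm, chart.dist_add_smul, abs_of_nonneg ht0, climbRatio]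
    exact le_of_eq (by field_simp; ring)

lemma IsHarnack.mul_height_pow_le_climb (hu : IsHarnack Ω u H) (chart : GraphChart Ω y e ψ Λ ε)
    {γ : ℕ} (hγ : H ≤ climbRatio Λ ^ γ) {z : ES N} {r : ℝ} (hz : 0 < ψ z)
    (hε : dist z y + 3 * r ≤ ε) (n : ℕ) (hn : climbRatio Λ ^ n * ψ z ≤ r) :
    u z * ψ z ^ γ ≤
      u (z + ((climbRatio Λ ^ n - 1) * ψ z) • e) * (climbRatio Λ ^ n * ψ z) ^ γ := by
  set b := climbRatio Λ
  have hb : 1 < b := one_lt_climbRatio chart.slope_pos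
  induction n with
  | zero => simp only [pow_zero, one_mul, sub_self, zero_mul, zero_smul, add_zero, le_refl]
  | succ n ih =>
    have hn' : b ^ n * ψ z ≤ r := le_trans (by gcongr; exacts [hb.le, n.le_succ]) hn
    have hbz : 0 ≤ (b ^ n - 1) * ψ z := mul_nonneg (sub_nonneg.2 (one_le_pow₀ hb.le)) hz.le
    set x := z + ((b ^ n - 1) * ψ z) • e with hx
    have hψx : ψ x = b ^ n * ψ z := by rw [hx, chart.height_add]; ring
    have hnext : x + ((b - 1) * ψ x) • e = z + ((b ^ (n + 1) - 1) * ψ z) • e := by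
      rw [hψx, hx, add_assoc, ← add_smul]
      congr 2
      ring
    have hstep := hu.le_mul_climb chart (x := x) (by rw [hψx]; positivity)
      (by linarith [chart.dist_add_smul_le z y hbz])
    rw [hnext] at hstep
    have hpos : 0 < u (z + ((b ^ (n + 1) - 1) * ψ z) • e) := by
      have hx0 : 0 < u x := hu.pos x <| (chart.mem_iff x (by
        rw [mem_ball]
        linarith [chart.dist_add_smul_le z y hbz])).2 (by rw [hψx]; positivity)
      exact pos_of_mul_pos_right (hx0.trans_le hstep) (zero_le_one.trans hu.one_le)
    calc u z * ψ z ^ γ ≤ u x * (b ^ n * ψ z) ^ γ := ih hn'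
      _ ≤ (b ^ γ * u (z + ((b ^ (n + 1) - 1) * ψ z) • e)) * (b ^ n * ψ z) ^ γ := by
          gcongr
          exact hstep.trans (by gcongr)
      _ = u (z + ((b ^ (n + 1) - 1) * ψ z) • e) * (b ^ (n + 1) * ψ z) ^ γ := by ring

lemma IsHarnack.exists_climb (hu : IsHarnack Ω u H) (chart : GraphChart Ω y e ψ Λ ε)
    {γ : ℕ} (hγ : H ≤ climbRatio Λ ^ γ) {z : ES N} {r : ℝ} (hz : 0 < ψ z) (hzr : ψ z ≤ r)
    (hε : dist z y + 3 * r ≤ ε) : ∃ x, dist x z ≤ r ∧ 1 / 2 * r ≤ ψ x ∧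
      u z * ψ z ^ γ ≤ u x * r ^ γ := by
  have hb := one_lt_climbRatio chart.slope_pos
  have hb2 := climbRatio_le_two chart.one_le
  obtain ⟨n, hn, hn'⟩ := exists_nat_pow_near ((one_le_div hz).2 hzr) hb
  rw [le_div_iff₀ hz] at hn
  rw [div_lt_iff₀ hz, pow_succ] at hn'
  have hbz0 : 0 < climbRatio Λ ^ n * ψ z := by positivity
  have hbz : 0 ≤ (climbRatio Λ ^ n - 1) * ψ z :=
    mul_nonneg (sub_nonneg.2 (one_le_pow₀ hb.le)) hz.le
  refine ⟨z + ((climbRatio Λ ^ n - 1) * ψ z) • e, ?_, ?_,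
    (hu.mul_height_pow_le_climb chart hγ hz hε n hn).trans ?_⟩
  · rw [chart.dist_add_smul, abs_of_nonneg hbz]
    linarith
  · rw [chart.height_add]
    linarith [mul_le_mul_of_nonneg_right hb2 hbz0.le]
  · gcongr
    refine (hu.pos _ ((chart.mem_iff _ ?_).2 ?_)).le
    · rw [mem_ball]
      linarith [chart.dist_add_smul_le z y hbz]
    · rw [chart.height_add]
      linarith

theorem IsHarnack.exists_forall_mul_height_pow_le (hu : IsHarnack Ω u H)
    (chart : GraphChart Ω y e ψ Λ ε) {κ A : ℝ} (hκ : 0 < κ) :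
    ∃ (γ : ℕ) (C B : ℝ), 0 < C ∧ ∀ r, 0 < r → B * r ≤ ε → ∀ q ∈ ball y (A * r),
      κ * r ≤ ψ q → ∀ z ∈ Ω ∩ ball y (A * r), u z * ψ z ^ γ ≤ C * r ^ γ * u q := by
  have hΛ := chart.slope_pos
  obtain ⟨γ, hγ⟩ := pow_unbounded_of_one_lt H (one_lt_climbRatio hΛ)
  obtain ⟨C, B, hC, hchain⟩ := hu.exists_forall_le_mul chart (σ := min (1 / 2) κ) (A := A + 1)
    (by positivity)
  refine ⟨γ, C * max 1 (Λ * A) ^ γ, max B (A + 3), by positivity,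
    fun r hr hrε q hq hψq z ⟨hzΩ, hz⟩ => ?_⟩
  have hrB : B * r ≤ ε := le_trans (by gcongr; exact le_max_left _ _) hrε
  have hrA : A * r + 3 * r ≤ ε := by
    rw [← add_mul]
    exact le_trans (by gcongr; exact le_max_right _ _) hrε
  have hsub : ball y (A * r) ⊆ ball y ε := ball_subset_ball (by linarith)
  have hq0 : 0 < u q := hu.pos q ((chart.mem_iff q (hsub hq)).2 (by nlinarith))
  have hψz := (chart.mem_iff z (hsub hz)).1 hzΩ
  have hcompare : ∀ x ∈ ball y ((A + 1) * r), 1 / 2 * r ≤ ψ x → u x ≤ C * u q := fun x hx hψx =>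
    hchain r hr hrB x hx q (ball_subset_ball (by linarith) hq)
      (le_trans (by gcongr; exact min_le_left _ _) hψx)
      (le_trans (by gcongr; exact min_le_right _ _) hψq)
  rcases le_or_gt (ψ z) r with hzr | hrz
  · obtain ⟨x, hxz, hψx, hx⟩ := hu.exists_climb chart hγ.le hψz hzr (by linarith [mem_ball.1 hz])
    calc u z * ψ z ^ γ ≤ u x * r ^ γ := hx
      _ ≤ C * u q * r ^ γ := by
          gcongr
          exact hcompare x (mem_ball.2 (by linarith [dist_triangle x z y, mem_ball.1 hz])) hψx
      _ ≤ C * u q * (max 1 (Λ * A) * r) ^ γ := by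
          gcongr
          exact le_mul_of_one_le_left hr.le (le_max_left _ _)
      _ = C * max 1 (Λ * A) ^ γ * r ^ γ * u q := by ring
  · have hzA : ψ z ≤ max 1 (Λ * A) * r := by
      calc ψ z ≤ Λ * dist z y := chart.height_le_mul_dist z
        _ ≤ Λ * (A * r) := by gcongr; exact (mem_ball.1 hz).le
        _ = Λ * A * r := by rw [mul_assoc]
        _ ≤ max 1 (Λ * A) * r := by gcongr; exact le_max_right _ _
    calc u z * ψ z ^ γ ≤ C * u q * (max 1 (Λ * A) * r) ^ γ := by
          gcongr
          exact hcompare z (ball_subset_ball (by linarith) hz) (by linarith)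
      _ = C * max 1 (Λ * A) ^ γ * r ^ γ * u q := by ring

end HarnackChain

section Carleson

variable {N : ℕ} {Ω : Set (ES N)} {y e : ES N} {ψ v : ES N → ℝ} {Λ ε H r : ℝ}

lemma continuousAt_indicator_of_tendsto_zero (hΩ : IsOpen Ω) (hv : ContinuousOn v Ω) {z : ES N}
    (hz : z ∈ frontier Ω → Tendsto v (𝓝[Ω] z) (𝓝 0)) : ContinuousAt (indicator Ω v) z := by
  have hout : Tendsto (indicator Ω v) (𝓝[Ωᶜ] z) (𝓝 0) := tendsto_const_nhds.congr'
    (eqOn_indicator' (f := v)).symm.eventuallyEq_nhdsWithin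
  by_cases hzΩ : z ∈ Ω
  · exact (hv.continuousAt (hΩ.mem_nhds hzΩ)).congr
      (eqOn_indicator.symm.eventuallyEq_of_mem (hΩ.mem_nhds hzΩ))
  have hin : Tendsto v (𝓝[Ω] z) (𝓝 0) := by
    by_cases hzc : z ∈ closure Ω
    · exact hz (hΩ.frontier_eq ▸ ⟨hzc, hzΩ⟩)
    · rw [notMem_closure_iff_nhdsWithin_eq_bot.1 hzc]
      exact tendsto_bot
  rw [ContinuousAt, indicator_of_notMem hzΩ, ← nhdsWithin_univ, ← union_compl_self Ω,
    nhdsWithin_union]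
  exact (hin.congr' eqOn_indicator.symm.eventuallyEq_nhdsWithin).sup hout

/-- The depth of `x` in the annulus `r ≤ dist x y ≤ 7 * r`: its distance to the two bounding
spheres, with a negative value outside the annulus. -/
def annulusDepth (y : ES N) (r : ℝ) (x : ES N) : ℝ := min (dist x y - r) (7 * r - dist x y)

lemma continuous_annulusDepth (y : ES N) (r : ℝ) : Continuous (annulusDepth y r) := by
  unfold annulusDepth
  fun_prop

lemma annulusDepth_nonneg_iff {x : ES N} :
    0 ≤ annulusDepth y r x ↔ r ≤ dist x y ∧ dist x y ≤ 7 * r := by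
  rw [annulusDepth, le_min_iff, sub_nonneg, sub_nonneg]

lemma annulusDepth_sub_dist_le (y : ES N) (r : ℝ) (x w : ES N) :
    annulusDepth y r x - dist w x ≤ annulusDepth y r w := by
  have hx : annulusDepth y r x ≤ dist x y - r := min_le_left _ _
  have hx' : annulusDepth y r x ≤ 7 * r - dist x y := min_le_right _ _
  exact le_min (by linarith [dist_triangle_left x y w]) (by linarith [dist_triangle w x y])

lemma ne_of_annulusDepth_nonneg (hr : 0 < r) {x : ES N} (hx : 0 ≤ annulusDepth y r x) : x ≠ y := by
  rintro rfl
  linarith [(annulusDepth_nonneg_iff.1 hx).1, dist_self x]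

lemma exists_forall_mul_annulusDepth_pow_le (hΩ : IsOpen Ω) (hv : ContinuousOn v Ω)
    (hpos : ∀ x ∈ Ω, 0 < v x) (hbdry : ∀ z ∈ frontier Ω, z ≠ y → Tendsto v (𝓝[Ω] z) (𝓝 0))
    (hr : 0 < r) {g : ℕ} (hg : g ≠ 0) {z : ES N} (hz : z ∈ Ω) (hdz : 0 < annulusDepth y r z) :
    ∃ x ∈ Ω, 0 < annulusDepth y r x ∧ ∀ w ∈ Ω, 0 ≤ annulusDepth y r w →
      v w * annulusDepth y r w ^ g ≤ v x * annulusDepth y r x ^ g := by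
  have hd := continuous_annulusDepth y r
  have hcompact : IsCompact {x | 0 ≤ annulusDepth y r x} :=
    (isCompact_closedBall y (7 * r)).of_isClosed_subset (isClosed_le continuous_const hd)
      fun x hx => (annulusDepth_nonneg_iff.1 hx).2
  have hcont : ContinuousOn (fun x => indicator Ω v x * annulusDepth y r x ^ g)
      {x | 0 ≤ annulusDepth y r x} := fun x hx =>
    ((continuousAt_indicator_of_tendsto_zero hΩ hv fun hxf =>
      hbdry x hxf (ne_of_annulusDepth_nonneg hr hx)).mul
        (hd.pow g).continuousAt).continuousWithinAt
  obtain ⟨x, hdx, hmax⟩ := hcompact.exists_isMaxOn ⟨z, hdz.le⟩ hcont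
  have hmax_pos : 0 < indicator Ω v x * annulusDepth y r x ^ g := by
    refine lt_of_lt_of_le ?_ (hmax hdz.le)
    simp only [indicator_of_mem hz]
    exact mul_pos (hpos z hz) (pow_pos hdz g)
  have hx : x ∈ Ω := by
    by_contra hx
    simp only [indicator_of_notMem hx, zero_mul, lt_irrefl] at hmax_pos
  refine ⟨x, hx, lt_of_le_of_ne hdx fun h0 => ?_, fun w hw hdw => ?_⟩
  · simp only [← h0, zero_pow hg, mul_zero, lt_irrefl] at hmax_pos
  · simpa only [mem_ofPred_eq, indicator_of_mem hw, indicator_of_mem hx] using hmax hdw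

/-- The constant such that the barrier decay improves the maximality of `v * d ^ g` at a point of
depth `d` and height less than `carlesonRatio N Λ g * d`. -/
def carlesonRatio (N : ℕ) (Λ : ℝ) (g : ℕ) : ℝ := (1 - decayFactor N Λ) / (14 * g)

lemma carlesonRatio_pos (hN : 0 < N) (hΛ : 1 ≤ Λ) {g : ℕ} (hg : 0 < g) :
    0 < carlesonRatio N Λ g :=
  div_pos (sub_pos.2 (decayFactor_lt_one hN hΛ)) (by positivity)

lemma carlesonRatio_lt (hN : 0 < N) (hΛ : 1 ≤ Λ) {g : ℕ} (hg : 0 < g) :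
    carlesonRatio N Λ g < 1 / 7 := by
  have hg1 : (1 : ℝ) ≤ g := Nat.one_le_cast.2 hg
  rw [carlesonRatio, div_lt_iff₀ (by positivity)]
  linarith [decayFactor_pos hN hΛ]

lemma decayFactor_lt_one_sub_carlesonRatio_pow (hN : 0 < N) (hΛ : 1 ≤ Λ) {g : ℕ} (hg : 0 < g) :
    decayFactor N Λ < (1 - 7 * carlesonRatio N Λ g) ^ g := by
  have : (0 : ℝ) < g := Nat.cast_pos.2 hg
  have hbernoulli : 1 + g * (-(7 * carlesonRatio N Λ g)) ≤ (1 + -(7 * carlesonRatio N Λ g)) ^ g :=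
    one_add_mul_le_pow (by linarith [carlesonRatio_lt hN hΛ hg]) g
  rw [← sub_eq_add_neg] at hbernoulli
  refine lt_of_lt_of_le ?_ hbernoulli
  calc decayFactor N Λ < 1 - (1 - decayFactor N Λ) / 2 := by linarith [decayFactor_lt_one hN hΛ]
    _ = 1 + g * (-(7 * carlesonRatio N Λ g)) := by
        rw [carlesonRatio]
        field_simp
        ring

lemma GraphChart.mul_annulusDepth_le_height (chart : GraphChart Ω y e ψ Λ ε) (hv : IsSubmean Ω v)
    (hpos : ∀ x ∈ Ω, 0 < v x) (hbdry : ∀ z ∈ frontier Ω, z ≠ y → Tendsto v (𝓝[Ω] z) (𝓝 0))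
    (hr : 0 < r) (hrε : 7 * r < ε) {g : ℕ} (hg : 0 < g) {x : ES N} (hx : x ∈ Ω)
    (hdx : 0 < annulusDepth y r x) (hmax : ∀ w ∈ Ω, 0 ≤ annulusDepth y r w →
      v w * annulusDepth y r w ^ g ≤ v x * annulusDepth y r x ^ g) :
    carlesonRatio N Λ g * annulusDepth y r x ≤ ψ x := by
  set c := carlesonRatio N Λ g
  have hc : 0 < 1 - 7 * c := by linarith [carlesonRatio_lt chart.dim_pos chart.one_le hg]
  have hsub : ∀ w, 0 ≤ annulusDepth y r w → w ∈ ball y ε := fun w hw =>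
    (annulusDepth_nonneg_iff.1 hw).2.trans_lt hrε
  have hψx : 0 < ψ x := (chart.mem_iff x (hsub x hdx.le)).1 hx
  by_contra! hlt
  have hdepth : ∀ w ∈ ball x (7 * ψ x), (1 - 7 * c) * annulusDepth y r x ≤ annulusDepth y r w :=
    fun w hw => by linarith [annulusDepth_sub_dist_le y r x w, mem_ball.1 hw]
  have hdepth0 : ∀ w ∈ ball x (7 * ψ x), 0 ≤ annulusDepth y r w := fun w hw =>
    (mul_pos hc hdx).le.trans (hdepth w hw)
  have hvx := hpos x hx
  -- This close to the graph, the decay of `v` contradicts the maximality of `x`.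
  have hdecay : v x ≤ decayFactor N Λ * (v x / (1 - 7 * c) ^ g) := by
    refine chart.le_decayFactor_mul hx hψx le_rfl (fun w hw => hsub w (hdepth0 w hw))
      (hv.mono inter_subset_left) (fun z hz => ?_) (by positivity) (fun w hw => ?_)
    · exact .of_tendsto (hbdry z hz.1 (ne_of_annulusDepth_nonneg hr (hdepth0 z hz.2))) le_rfl
    · have hvw := hpos w hw.1
      rw [le_div_iff₀ (by positivity)]
      refine le_of_mul_le_mul_right ?_ (pow_pos hdx g)
      calc v w * (1 - 7 * c) ^ g * annulusDepth y r x ^ g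
          = v w * ((1 - 7 * c) * annulusDepth y r x) ^ g := by rw [mul_pow, mul_assoc]
        _ ≤ v w * annulusDepth y r w ^ g := by gcongr; exact hdepth w hw.2
        _ ≤ v x * annulusDepth y r x ^ g := hmax w hw.1 (hdepth0 w hw.2)
  rw [← mul_div_assoc, le_div_iff₀ (by positivity), mul_comm] at hdecay
  exact (decayFactor_lt_one_sub_carlesonRatio_pow chart.dim_pos chart.one_le hg).not_ge
    (le_of_mul_le_mul_right hdecay hvx)

theorem IsHarnack.exists_carleson (hu : IsHarnack Ω v H) (chart : GraphChart Ω y e ψ Λ ε)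
    (hv : IsSubmean Ω v) (hbdry : ∀ z ∈ frontier Ω, z ≠ y → Tendsto v (𝓝[Ω] z) (𝓝 0))
    {κ : ℝ} (hκ : 0 < κ) :
    ∃ C B : ℝ, 0 < C ∧ ∀ r, 0 < r → B * r ≤ ε → ∀ q ∈ ball y (8 * r), κ * r ≤ ψ q →
      ∀ z ∈ Ω, 3 * r ≤ dist z y → dist z y ≤ 5 * r → v z ≤ C * v q := by
  have hΛ := chart.slope_pos
  obtain ⟨γ, C, B, hC, hpoly⟩ := hu.exists_forall_mul_height_pow_le chart (A := 8) hκ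
  set c := carlesonRatio N Λ (γ + 1)
  have hc : 0 < c := carlesonRatio_pos chart.dim_pos chart.one_le γ.succ_pos
  refine ⟨8 * Λ * C / c ^ (γ + 1), max B 9, by positivity,
    fun r hr hrε q hq hψq z hz hz3 hz5 => ?_⟩
  have hrB : B * r ≤ ε := le_trans (by gcongr; exact le_max_left _ _) hrε
  have hr9 : 9 * r ≤ ε := le_trans (by gcongr; exact le_max_right _ _) hrε
  have hdz : r ≤ annulusDepth y r z := le_min (by linarith) (by linarith)
  obtain ⟨x, hx, hdx, hmax⟩ := exists_forall_mul_annulusDepth_pow_le chart.isOpen hv.1 hu.pos hbdry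
    hr γ.succ_ne_zero hz (hr.trans_le hdz)
  have hdx_le : c * annulusDepth y r x ≤ ψ x :=
    chart.mul_annulusDepth_le_height hv hu.pos hbdry hr (by linarith) γ.succ_pos hx hdx hmax
  have hxy : dist x y < 8 * r := by linarith [(annulusDepth_nonneg_iff.1 hdx.le).2]
  have hψx : ψ x ≤ 8 * Λ * r := by
    calc ψ x ≤ Λ * dist x y := chart.height_le_mul_dist x
      _ ≤ Λ * (8 * r) := by gcongr
      _ = 8 * Λ * r := by ring
  have hvq : 0 < v q := hu.pos q <| (chart.mem_iff q (ball_subset_ball (by linarith) hq)).2 <|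
    (mul_pos hκ hr).trans_le hψq
  have hvx := hu.pos x hx
  have hvz := hu.pos z hz
  rw [div_mul_eq_mul_div, le_div_iff₀ (by positivity)]
  refine le_of_mul_le_mul_right ?_ (pow_pos hr (γ + 1))
  calc v z * c ^ (γ + 1) * r ^ (γ + 1) = c ^ (γ + 1) * (v z * r ^ (γ + 1)) := by ring
    _ ≤ c ^ (γ + 1) * (v z * annulusDepth y r z ^ (γ + 1)) := by gcongr
    _ ≤ c ^ (γ + 1) * (v x * annulusDepth y r x ^ (γ + 1)) := by
        gcongr ?_ * ?_
        exact hmax z hz (hr.le.trans hdz)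
    _ = v x * (c * annulusDepth y r x) ^ (γ + 1) := by rw [mul_pow]; ring
    _ ≤ v x * ψ x ^ (γ + 1) := by gcongr
    _ = v x * ψ x ^ γ * ψ x := by rw [pow_succ, mul_assoc]
    _ ≤ C * r ^ γ * v q * (8 * Λ * r) := by
        gcongr ?_ * ?_
        · exact (by positivity : 0 ≤ c * annulusDepth y r x).trans hdx_le
        · exact hpoly r hr hrB q hq hψq x ⟨hx, hxy⟩
    _ = 8 * Λ * C * v q * r ^ (γ + 1) := by ring

end Carleson

section BoundaryComparison

variable {N : ℕ} {Ω : Set (ES N)} {y e : ES N} {ψ u v w : ES N → ℝ} {Λ ε H H' : ℝ}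

theorem GraphChart.exists_nonneg_of_dist_eq (chart : GraphChart Ω y e ψ Λ ε) :
    ∃ σ m : ℝ, 0 < σ ∧ 0 < m ∧ ∀ (r : ℝ) (w : ES N → ℝ), 0 < r → 6 * r ≤ ε →
      IsSubmean Ω (fun x => -w x) →
      (∀ z ∈ frontier Ω, z ≠ y → LimsupNonposAt Ω (fun x => -w x) z) →
      (∀ z ∈ Ω, 3 * r ≤ dist z y → dist z y ≤ 5 * r → -m ≤ w z) →
      (∀ z ∈ Ω, 3 * r ≤ dist z y → dist z y ≤ 5 * r → σ * r ≤ ψ z → 1 ≤ w z) →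
      ∀ z ∈ Ω, dist z y = 4 * r → 0 ≤ w z := by
  obtain ⟨δ, m, hδ, hδ8, hm, hnonneg⟩ := chart.nonneg_add_smul
  refine ⟨δ / 2, m, half_pos hδ, hm, fun r w hr hrε hw hbdry hneg hone z hz hzr => ?_⟩
  rcases le_or_gt (r / 2) (ψ z) with hψ | hψ
  · exact zero_le_one.trans (hone z hz (by linarith) (by linarith) (by nlinarith))
  have hψz : 0 < ψ z := (chart.mem_iff z (by rw [mem_ball]; linarith)).1 hz
  set p := z - ψ z • e
  have hpz : p + ψ z • e = z := sub_add_cancel _ _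
  have hp : ψ p = 0 := by linarith [hpz ▸ chart.height_add p (ψ z)]
  have hzp : dist z p = ψ z := by rw [← abs_of_pos hψz, ← chart.dist_add_smul p (ψ z), hpz]
  have hannulus : ∀ x ∈ ball p (r / 2), 3 * r ≤ dist x y ∧ dist x y ≤ 5 * r := fun x hx => by
    have hxz : dist x z < r := by linarith [dist_triangle_right x z p, mem_ball.1 hx]
    constructor
    · linarith [dist_triangle_left z y x]
    · linarith [dist_triangle x z y]
  rw [← hpz]
  refine hnonneg p (r / 2) w hp (fun x hx => mem_ball.2 (by linarith [(hannulus x hx).2]))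
    (hw.mono inter_subset_left) (fun x hx => hbdry x hx.1 ?_) ⟨fun x hx hψx => ?_, fun x hx => ?_⟩
    (ψ z) hψz hψ
  · rintro rfl
    linarith [(hannulus _ hx.2).1, dist_self x]
  · exact hone x hx.1 (hannulus x hx.2).1 (hannulus x hx.2).2 (by linarith)
  · exact hneg x hx.1 (hannulus x hx.2).1 (hannulus x hx.2).2

lemma nonneg_of_nonneg_on_sphere (hN : 0 < N) (hΩ : IsOpen Ω) (hb : Bornology.IsBounded Ω)
    (hw : IsSubmean Ω fun x => -w x)
    (hbdry : ∀ z ∈ frontier Ω, z ≠ y → LimsupNonposAt Ω (fun x => -w x) z) {ρ : ℝ} (hρ : 0 < ρ)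
    (hsphere : ∀ z ∈ Ω, dist z y = ρ → 0 ≤ w z) : ∀ x ∈ Ω, ρ < dist x y → 0 ≤ w x := by
  intro x hx hxρ
  refine neg_nonpos.1 <| (hw.mono inter_subset_left).nonpos_of_frontier_inter hN hΩ
    (isClosed_closedBall (x := y) (ε := ρ)).isOpen_compl (hb.subset inter_subset_left)
    (fun z hz => ?_) (fun z hz => ?_) x ⟨hx, not_le.2 hxρ⟩
  · refine (hbdry z hz.1 ?_).mono inter_subset_left
    rintro rfl
    rw [closure_compl] at hz
    exact hz.2 (ball_subset_interior_closedBall (mem_ball_self hρ))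
  · rw [frontier_compl] at hz
    have hwz : -w z ≤ 0 :=
      neg_nonpos.2 (hsphere z hz.1 (frontier_closedBall_subset_sphere hz.2))
    exact (LimsupNonposAt.of_tendsto (hw.1 z hz.1) hwz).mono inter_subset_left

theorem GraphChart.exists_le_of_annulus_bounds (chart : GraphChart Ω y e ψ Λ ε)
    (hb : Bornology.IsBounded Ω) :
    ∃ σ m : ℝ, 0 < σ ∧ 0 < m ∧ ∀ (r : ℝ) (u v : ES N → ℝ), 0 < r → 6 * r ≤ ε →
      (IsSubmean Ω fun x => -u x) → IsSubmean Ω v → (∀ z ∈ Ω, 0 < u z) →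
      (∀ z ∈ frontier Ω, z ≠ y → Tendsto u (𝓝[Ω] z) (𝓝 0)) →
      (∀ z ∈ frontier Ω, z ≠ y → Tendsto v (𝓝[Ω] z) (𝓝 0)) →
      (∀ z ∈ Ω, 3 * r ≤ dist z y → dist z y ≤ 5 * r → v z ≤ m) →
      (∀ z ∈ Ω, dist z y ≤ 5 * r → σ * r ≤ ψ z → 1 + m ≤ u z) →
      ∀ x ∈ Ω, 4 * r < dist x y → v x ≤ u x := by
  obtain ⟨σ, m, hσ, hm, hnonneg⟩ := chart.exists_nonneg_of_dist_eq
  refine ⟨σ, m, hσ, hm, fun r u v hr hrε hu hv hu_pos hu_bdry hv_bdry hvm hum x hx hxr => ?_⟩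
  have hw : IsSubmean Ω fun x => -(u x - v x) := by
    simpa only [neg_sub', sub_neg_eq_add] using hu.add hv
  have hbdry : ∀ z ∈ frontier Ω, z ≠ y → LimsupNonposAt Ω (fun x => -(u x - v x)) z :=
    fun z hz hzy => .of_tendsto ((hu_bdry z hz hzy).sub (hv_bdry z hz hzy)).neg
      (by rw [sub_zero, neg_zero])
  have hsphere : ∀ z ∈ Ω, dist z y = 4 * r → 0 ≤ u z - v z :=
    hnonneg r (fun x => u x - v x) hr hrε hw hbdry
      (fun z hz h3 h5 => by linarith [hvm z hz h3 h5, hu_pos z hz])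
      (fun z hz h3 h5 hψz => by linarith [hvm z hz h3 h5, hum z hz h5 hψz])
  exact sub_nonneg.1 <| nonneg_of_nonneg_on_sphere chart.dim_pos chart.isOpen hb hw hbdry
    (by positivity) hsphere x hx hxr

theorem IsHarnack.exists_boundary_comparison (hu : IsHarnack Ω u H) (hv : IsHarnack Ω v H')
    (chart : GraphChart Ω y e ψ Λ ε) (hb : Bornology.IsBounded Ω)
    (hu_super : IsSubmean Ω fun x => -u x) (hv_sub : IsSubmean Ω v)
    (hu_bdry : ∀ z ∈ frontier Ω, z ≠ y → Tendsto u (𝓝[Ω] z) (𝓝 0))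
    (hv_bdry : ∀ z ∈ frontier Ω, z ≠ y → Tendsto v (𝓝[Ω] z) (𝓝 0)) {κ : ℝ} (hκ : 0 < κ) :
    ∃ C B : ℝ, 0 < C ∧ ∀ r, 0 < r → B * r ≤ ε → ∀ q ∈ ball y (8 * r), κ * r ≤ ψ q →
      ∀ x ∈ Ω, 4 * r < dist x y → u q * v x ≤ C * v q * u x := by
  obtain ⟨σ, m, hσ, hm, hle⟩ := chart.exists_le_of_annulus_bounds hb
  obtain ⟨C₁, B₁, hC₁, hchain⟩ := hu.exists_forall_le_mul chart (σ := min σ κ) (A := 8)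
    (by positivity)
  obtain ⟨C₂, B₂, hC₂, hcarleson⟩ := hv.exists_carleson chart hv_sub hv_bdry hκ
  refine ⟨C₁ * (1 + m) * C₂ / m, max 9 (max B₁ B₂), by positivity,
    fun r hr hrε q hq hψq x hx hxr => ?_⟩
  obtain ⟨hr9, hrB₁, hrB₂⟩ : 9 * r ≤ ε ∧ B₁ * r ≤ ε ∧ B₂ * r ≤ ε := by
    simpa only [max_mul_of_nonneg _ _ hr.le, max_le_iff] using hrε
  have hqΩ : q ∈ Ω := (chart.mem_iff q (ball_subset_ball (by linarith) hq)).2 <|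
    (mul_pos hκ hr).trans_le hψq
  have huq := hu.pos q hqΩ
  have hvq := hv.pos q hqΩ
  let α := C₁ * (1 + m) / u q
  let β := m / (C₂ * v q)
  have hα : 0 < α := by positivity
  have hβ : 0 < β := by positivity
  have hαβ : β * v x ≤ α * u x := by
    refine hle r (fun z => α * u z) (fun z => β * v z) hr (by linarith)
      (by simpa only [mul_neg] using hu_super.const_mul hα.le) (hv_sub.const_mul hβ.le)
      (fun z hz => mul_pos hα (hu.pos z hz))
      (fun z hz hzy => by simpa only [mul_zero] using (hu_bdry z hz hzy).const_mul α)
      (fun z hz hzy => by simpa only [mul_zero] using (hv_bdry z hz hzy).const_mul β)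
      (fun z hz h3 h5 => ?_) (fun z _ h5 hψz => ?_) x hx hxr
    · rw [div_mul_eq_mul_div, div_le_iff₀ (by positivity)]
      exact mul_le_mul_of_nonneg_left (hcarleson r hr hrB₂ q hq hψq z hz h3 h5) hm.le
    · have huqz : u q ≤ C₁ * u z := hchain r hr hrB₁ q hq z (mem_ball.2 (by linarith))
        (le_trans (by gcongr; exact min_le_right _ _) hψq)
        (le_trans (by gcongr; exact min_le_left _ _) hψz)
      rw [div_mul_eq_mul_div, le_div_iff₀ huq, mul_right_comm, mul_comm (1 + m)]
      gcongr
  rw [div_mul_eq_mul_div, div_mul_eq_mul_div, div_le_div_iff₀ (by positivity) huq] at hαβ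
  rw [div_mul_eq_mul_div, div_mul_eq_mul_div, le_div_iff₀ hm]
  linarith

end BoundaryComparison

section MartinKernel

variable {N : ℕ} {Ω : Set (ES N)} {y e x₀ ν : ES N} {ψ u V K KV : ES N → ℝ} {Λ ε a η : ℝ}

lemma IsWeakPoisson.neg {f : ES N → ℝ} (h : IsWeakPoisson Ω u f) :
    IsWeakPoisson Ω (fun x => -u x) fun x => -f x :=
  ⟨h.1.neg, fun φ hφ => by simp only [neg_mul, integral_neg, h.2 φ hφ]⟩

lemma IsWeakPoisson.isSubmean {f : ES N → ℝ} (h : IsWeakPoisson Ω u f) (hΩ : IsOpen Ω)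
    (hf : ∀ x ∈ Ω, 0 ≤ f x) : IsSubmean Ω u :=
  ⟨h.1, fun _ _ hr hxr => h.le_radialAvg hΩ hr hxr fun w hw =>
    hf w (hxr (ball_subset_closedBall hw))⟩

lemma LVHarmonic.isWeakPoisson (h : LVHarmonic Ω V u) :
    IsWeakPoisson Ω u fun x => V x * u x := ⟨h.1, h.2.2.2⟩

lemma exists_graphChart (hΩ : IsLipschitzDomain Ω) (hy : y ∈ frontier Ω) :
    ∃ (e : ES N) (ψ : ES N → ℝ) (Λ ε : ℝ), GraphChart Ω y e ψ Λ ε := by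
  obtain ⟨hopen, -, hlocal⟩ := hΩ
  obtain ⟨g, i, f, L, ε, hε, hf, hindep, hmem⟩ := hlocal y hy
  have hyc : y ∈ closure Ω ∧ y ∉ Ω := by rwa [hopen.frontier_eq] at hy
  have hmem' : ∀ x ∈ ball y ε, (x ∈ Ω ↔ 0 < g x i - f (g x)) := fun x hx => by
    rw [hmem x hx, sub_pos]
  have hcont : Continuous fun x => g x i - f (g x) := by
    have := hf.continuous
    fun_prop
  refine ⟨g.symm (EuclideanSpace.single i 1), fun x => g x i - f (g x), 1 + L, ε,
    { isOpen := hopen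
      radius_pos := hε
      one_le := le_add_of_nonneg_right L.2
      norm_dir := by rw [g.symm.norm_map, PiLp.norm_single, norm_one]
      lipschitz := fun x w => ?_
      height_add := fun x s => ?_
      mem_iff := hmem'
      height_self := ?_ }⟩
  · have hnorm : ‖g x - g w‖ = ‖x - w‖ := by rw [← map_sub, g.norm_map]
    have hcoord : |g x i - g w i| ≤ ‖x - w‖ := hnorm ▸ PiLp.norm_apply_le (g x - g w) i
    have hgraph : |f (g x) - f (g w)| ≤ L * ‖x - w‖ := hnorm ▸ hf.norm_sub_le (g x) (g w)
    calc |g x i - f (g x) - (g w i - f (g w))|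
        = |(g x i - g w i) - (f (g x) - f (g w))| := by rw [sub_sub_sub_comm]
      _ ≤ |g x i - g w i| + |f (g x) - f (g w)| := abs_sub _ _
      _ ≤ (1 + L) * ‖x - w‖ := by linarith
  · have hshift : g (x + s • g.symm (EuclideanSpace.single i 1))
        = g x + s • EuclideanSpace.single i 1 := by rw [map_add, map_smul, g.apply_symm_apply]
    have hgraph : f (g x + s • EuclideanSpace.single i 1) = f (g x) :=
      hindep _ _ fun j hj => by simp [hj]
    simp only [hshift, hgraph, PiLp.add_apply, PiLp.smul_apply, PiLp.single_apply, if_true,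
      smul_eq_mul, mul_one]
    ring
  · refine le_antisymm (not_lt.1 fun h => hyc.2 ((hmem' y (mem_ball_self hε)).2 h))
      (not_lt.1 fun h => ?_)
    obtain ⟨x, ⟨hx, hxε⟩, hxΩ⟩ := mem_closure_iff_nhds.1 hyc.1 _ <|
      inter_mem ((hcont.tendsto y).eventually_lt_const h) (ball_mem_nhds y hε)
    exact lt_asymm hx ((hmem' x hxε).1 hxΩ)

lemma GraphChart.lt_height_of_truncCone_subset (chart : GraphChart Ω y e ψ Λ ε) (hη : 0 ≤ η)
    (hcone : truncCone y ν η ⊆ Ω) {t : ℝ} (ht : 0 < t) (htη : t ≤ η) (htε : t * (‖ν‖ + η) < ε) :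
    t * η < ψ (y + t • ν) := by
  have hnorm : ‖-(η • e)‖ = η := by
    rw [norm_neg, norm_smul, chart.norm_dir, mul_one, Real.norm_of_nonneg hη]
  have hmem : y + t • (ν + -(η • e)) ∈ Ω := hcone ⟨t, _, ht, htη, hnorm.le, rfl⟩
  have hball : y + t • (ν + -(η • e)) ∈ ball y ε := by
    rw [mem_ball, dist_self_add_left, norm_smul, Real.norm_of_nonneg ht.le]
    refine lt_of_le_of_lt ?_ htε
    gcongr
    exact (norm_add_le _ _).trans_eq (by rw [hnorm])
  have hpos := (chart.mem_iff _ hball).1 hmem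
  have heq : y + t • (ν + -(η • e)) = y + t • ν + (-(t * η)) • e := by module
  rw [heq, chart.height_add] at hpos
  linarith

lemma IsMartinKernel.exists_forall_le_mul (hK : IsMartinKernel Ω (fun _ => 0) x₀ y K)
    (hKV : IsMartinKernel Ω V x₀ y KV) (hV : VClass Ω a V) (chart : GraphChart Ω y e ψ Λ ε)
    (hb : Bornology.IsBounded Ω) (hx₀ : x₀ ∈ Ω) {κ : ℝ} (hκ : 0 < κ) :
    ∃ C B : ℝ, 0 < C ∧ ∀ r, 0 < r → B * r ≤ ε → 4 * r < dist x₀ y →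
      ∀ q ∈ ball y (8 * r), κ * r ≤ ψ q → K q ≤ C * KV q := by
  obtain ⟨hK_harm, hK_pos, hK_one, hK_bdry⟩ := hK
  obtain ⟨hKV_harm, hKV_pos, hKV_one, hKV_bdry⟩ := hKV
  have hne : Ωᶜ.Nonempty := ⟨y, chart.self_notMem⟩
  have ha : 0 ≤ a := (mul_nonneg (hV.2 x₀ hx₀).1 (sq_nonneg _)).trans (hV.2 x₀ hx₀).2
  have hzero : VClass Ω 0 fun _ => 0 := ⟨measurable_const, fun _ _ => by simp⟩
  have hK_super : IsSubmean Ω fun x => -K x :=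
    hK_harm.isWeakPoisson.neg.isSubmean chart.isOpen fun _ _ => by simp
  have hKV_sub : IsSubmean Ω KV := hKV_harm.isWeakPoisson.isSubmean chart.isOpen fun x hx =>
    mul_nonneg (hV.2 x hx).1 (hKV_pos x hx).le
  have hK_harnack := hzero.isHarnack le_rfl chart.isOpen hne hK_harm.isWeakPoisson hK_pos
  have hKV_harnack := hV.isHarnack ha chart.isOpen hne hKV_harm.isWeakPoisson hKV_pos
  obtain ⟨C, B, hC, hcomp⟩ := hK_harnack.exists_boundary_comparison hKV_harnack chart hb
    hK_super hKV_sub hK_bdry hKV_bdry hκ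
  refine ⟨C, B, hC, fun r hr hrε hr₀ q hq hψq => ?_⟩
  simpa only [hK_one, hKV_one, mul_one] using hcomp r hr hrε q hq hψq x₀ hx₀ hr₀

theorem statement13_general (chart : GraphChart Ω y e ψ Λ ε) (hb : Bornology.IsBounded Ω)
    (hx₀ : x₀ ∈ Ω) (hV : VClass Ω a V) (hη : 0 < η) (hcone : truncCone y ν η ⊆ Ω)
    (hK : IsMartinKernel Ω (fun _ => 0) x₀ y K) (hKV : IsMartinKernel Ω V x₀ y KV) :
    ∃ C' : ℝ, 0 < C' ∧ ∃ t₀ > (0 : ℝ), ∀ t : ℝ, 0 < t → t ≤ t₀ →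
      K (y + t • ν) ≤ C' * KV (y + t • ν) := by
  have hν : 0 < ‖ν‖ := norm_pos_iff.2 fun hν => chart.self_notMem <|
    hcone ⟨η, 0, hη, le_rfl, by simpa using hη.le, by simp [hν]⟩
  have hdist : 0 < dist x₀ y := dist_pos.2 fun h => chart.self_notMem (h ▸ hx₀)
  obtain ⟨C, B, hC, hle⟩ := hK.exists_forall_le_mul hKV hV chart hb hx₀ (div_pos hη hν)
  have hsmall : ∀ c d : ℝ, 0 < d → ∀ᶠ t in 𝓝[>] (0 : ℝ), t * c < d := fun c d hd =>
    nhdsWithin_le_nhds <| (continuous_mul_const c).continuousAt.eventually_lt_const (by simpa)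
  obtain ⟨t₀, ht₀, hsub⟩ := mem_nhdsGT_iff_exists_Ioc_subset.1 <|
    (((hsmall 1 η hη).and (hsmall (‖ν‖ + η) ε chart.radius_pos)).and
      ((hsmall (‖ν‖ * B) ε chart.radius_pos).and (hsmall (‖ν‖ * 4) _ hdist)))
  refine ⟨C, hC, t₀, ht₀, fun t ht htt₀ => ?_⟩
  obtain ⟨⟨htη, htε⟩, htB, htdist⟩ := hsub ⟨ht, htt₀⟩
  have hr : 0 < t * ‖ν‖ := mul_pos ht hν
  refine hle (t * ‖ν‖) hr (by linarith) (by linarith) _ ?_ ?_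
  · rw [mem_ball, dist_self_add_left, norm_smul, Real.norm_of_nonneg ht.le]
    linarith
  · rw [div_mul_eq_mul_div, mul_left_comm, ← mul_assoc, mul_div_cancel_right₀ _ hν.ne']
    exact (chart.lt_height_of_truncCone_subset hη.le hcone ht (by linarith) htε).le

end MartinKernel

/-- Corollary `KVKcoro`. If `ν` is a pseudo-normal at `y ∈ ∂Ω`,
then `K_y(y+tν) ≤ C' K_y^V(y+tν)` for some `C' > 0` and all small `t > 0`. -/
theorem statement13 {N : ℕ} (hN : 2 ≤ N) (Ω : Set (ES N))
    (hΩ : IsLipschitzDomain Ω) (hbd : Bornology.IsBounded Ω)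
    (x₀ : ES N) (hx₀ : x₀ ∈ Ω) (a : ℝ) (ha : 0 < a)
    (V : ES N → ℝ) (hV : VClass Ω a V)
    (y : ES N) (hy : y ∈ frontier Ω)
    (ν : ES N) (η : ℝ) (hν : ν ≠ 0) (hη : 0 < η)
    (hcone : truncCone y ν η ⊆ Ω \ {x₀})
    (K KV : ES N → ℝ)
    (hK : IsMartinKernel Ω (fun _ => 0) x₀ y K)
    (hKV : IsMartinKernel Ω V x₀ y KV) :
    ∃ C' : ℝ, 0 < C' ∧ ∃ t₀ > (0:ℝ), ∀ t : ℝ, 0 < t → t ≤ t₀ →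
      K (y + t • ν) ≤ C' * KV (y + t • ν) := by
  obtain ⟨e, ψ, Λ, ε, chart⟩ := exists_graphChart hΩ hy
  exact statement13_general chart hbd hx₀ hV hη (hcone.trans sdiff_subset) hK hKV

end Anc

end
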